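/- Let 0 ≤ q ≤ 1, η > 0, θ ≥ 0, τ ≥ 0 and 0 < s ≤ t. Let μ_s be a probability measure on ℝ with finite moments of all orders such that ∫ p̄_m(y;s) p̄_n(y;s) μ_s(dy) = 0 whenever m ≠ n. Then for every x in the topological support of μ_s (i.e. every open neighborhood of x has positive μ_s-measure) there exists a unique probability measure ν_x on ℝ with finite moments of all orders such that p̄_n(x;s) = ∫ p̄_n(y;t) ν_x(dy) for all n ≥ 0. -/

import Mathlib

/-- `[n]_q = 1 + q + ⋯ + q^{n-1}`. -/
noncomputable def qnum (q : ℝ) (n : ℕ) : ℝ := ∑ i ∈ Finset.range n, q ^ i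

/-- `[n]_q! = [1]_q [2]_q ⋯ [n]_q`. -/
noncomputable def qfact (q : ℝ) (n : ℕ) : ℝ := ∏ i ∈ Finset.range n, qnum q (i + 1)

/-- q-binomial coefficient `[n choose k]_q`, with the convention that it is `0` for `k > n`. -/
noncomputable def qbinom (q : ℝ) (n k : ℕ) : ℝ :=
  if k ≤ n then qfact q n / (qfact q (n - k) * qfact q k) else 0

/-- `a_n = η⁻¹ + θ[n]_q + [n]_q² ητ`. -/
noncomputable def aCoef (η θ τ q : ℝ) (n : ℕ) : ℝ :=
  η⁻¹ + θ * qnum q n + (qnum q n) ^ 2 * η * τ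

/-- `b_n(t) = (tη + θ + ([n]_q + [n-1]_q)ητ)[n]_q`. -/
noncomputable def bCoef (η θ τ q t : ℝ) (n : ℕ) : ℝ :=
  (t * η + θ + (qnum q n + qnum q (n - 1)) * η * τ) * qnum q n

/-- `c_n(t) = η(t + τ[n-1]_q)[n]_q`. -/
noncomputable def cCoef (η τ q t : ℝ) (n : ℕ) : ℝ :=
  η * (t + τ * qnum q (n - 1)) * qnum q n

/-- `A_n(x,s) = a_n + q^n x - sη q^n [n]_q`. -/
noncomputable def ACoef (η θ τ q x s : ℝ) (n : ℕ) : ℝ :=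
  aCoef η θ τ q n + q ^ n * x - s * η * q ^ n * qnum q n

/-- `x_k(s) = ((sη q^k - θ)[k]_q - η⁻¹ - ητ[k]_q²)/q^k`, the zero of `x ↦ A_k(x,s)`. -/
noncomputable def xPt (η θ τ q s : ℝ) (k : ℕ) : ℝ :=
  ((s * η * q ^ k - θ) * qnum q k - η⁻¹ - η * τ * (qnum q k) ^ 2) / q ^ k

open MeasureTheory

/-!
With `A_k = A_k(x, s)`, iterated Christoffel transforms of the polynomials `p̄_n(·; s)` are
orthogonal for the densities `A_0 ⋯ A_(m-1)` with respect to `μ_s`. Their squared norms are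
nonnegative because `a_n ≥ 0`, so that `∫ A_0 ⋯ A_(m-1) p² dμ_s ≥ 0` for every polynomial `p`, and
polynomial approximation gives `A_0 ⋯ A_(m-1) ≥ 0` on the support of `μ_s`. At a point `x` of the
support the rates `A_k` are therefore positive up to the first one that vanishes, if any.

Expand `p̄_n(·; t)` in the polynomials whose Jacobi matrix, shifted by `η⁻¹`, is that of a
birth-and-death process with birth rates `A_k` and death rates
`η (t - s q^(k-1) + τ [k-1]_q) [k]_q`. The constant coefficient is `p̄_n(x; s)`, so `ν_x` is the
orthogonality measure of these polynomials. It exists by Favard's theorem, because the rates are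
nonnegative until they break off. Since the rates grow at most quadratically, `exp (ε √(y + η⁻¹))`
is integrable for `ν_x` and for `μ_s`: this is Hardy's condition, under which the moments determine
the measure and polynomials are dense in the weighted `L²` spaces.
-/

section

open ProbabilityTheory Filter Topology Polynomial

/-- A measure on `ℝ` all of whose absolute moments are finite. -/
def HasFiniteMoments (μ : Measure ℝ) : Prop :=
  ∀ n : ℕ, Integrable (fun x : ℝ => |x| ^ n) μ

namespace HasFiniteMoments

lemma integrable_eval {μ : Measure ℝ} (h : HasFiniteMoments μ) (p : ℝ[X]) :
    Integrable (fun x => p.eval x) μ := by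
  simp only [eval_eq_sum_range]
  refine integrable_finsetSum _ fun i _ => Integrable.const_mul ?_ _
  exact (h i).mono' (by fun_prop) (.of_forall fun x => by simp)

lemma of_integrable_eval {μ : Measure ℝ} (h : ∀ p : ℝ[X], Integrable (fun x => p.eval x) μ) :
    HasFiniteMoments μ := fun n => by
  simpa [abs_pow] using (h (X ^ n)).abs

lemma memLp_two_eval {μ : Measure ℝ} (h : HasFiniteMoments μ) (p : ℝ[X]) :
    MemLp (fun x => p.eval x) 2 μ := by
  rw [memLp_two_iff_integrable_sq (by fun_prop)]
  exact (h.integrable_eval (p ^ 2)).congr (.of_forall fun x => eval_pow 2)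

/-- The moment functional `p ↦ ∫ p dμ`. -/
noncomputable def functional {μ : Measure ℝ} (h : HasFiniteMoments μ) : ℝ[X] →ₗ[ℝ] ℝ where
  toFun p := ∫ x, p.eval x ∂μ
  map_add' p r := by
    simp only [eval_add]
    exact integral_add (h.integrable_eval p) (h.integrable_eval r)
  map_smul' a p := by
    simp only [eval_smul, smul_eq_mul, RingHom.id_apply]
    exact integral_const_mul a _

lemma functional_apply {μ : Measure ℝ} (h : HasFiniteMoments μ) (p : ℝ[X]) :
    h.functional p = ∫ x, p.eval x ∂μ := rfl

end HasFiniteMoments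

section Cramer

variable {μ ν : Measure ℝ} {ε : ℝ}

lemma mem_interior_integrableExpSet_of_abs_lt
    (h : ∀ t : ℝ, |t| < ε → Integrable (fun x => Real.exp (t * x)) μ) {t : ℝ} (ht : |t| < ε) :
    t ∈ interior (integrableExpSet id μ) :=
  mem_interior.mpr ⟨Set.Ioo (-ε) ε, fun _ hu => h _ (abs_lt.mpr hu), isOpen_Ioo, abs_lt.mp ht⟩

lemma iteratedDeriv_complexMGF_id_zero (h : 0 ∈ interior (integrableExpSet id μ)) (n : ℕ) :
    iteratedDeriv n (complexMGF id μ) 0 = ((∫ x, x ^ n ∂μ : ℝ) : ℂ) := by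
  rw [iteratedDeriv_complexMGF (by simpa using h), ← integral_complex_ofReal]
  simp

-- The transforms are analytic on a strip around the imaginary axis, and the moments are their
-- derivatives at `0`.
lemma eq_of_integral_pow_eq_of_integrable_exp [IsFiniteMeasure μ] [IsFiniteMeasure ν]
    (hε : 0 < ε)
    (hμ : ∀ t : ℝ, |t| < ε → Integrable (fun x => Real.exp (t * x)) μ)
    (hν : ∀ t : ℝ, |t| < ε → Integrable (fun x => Real.exp (t * x)) ν)
    (hmom : ∀ n : ℕ, ∫ x, x ^ n ∂μ = ∫ x, x ^ n ∂ν) : μ = ν := by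
  have hμ' := fun {t} => mem_interior_integrableExpSet_of_abs_lt hμ (t := t)
  have hν' := fun {t} => mem_interior_integrableExpSet_of_abs_lt hν (t := t)
  have h0 : |(0 : ℝ)| < ε := by simpa using hε
  let S : Set ℂ := {z | z.re ∈ Set.Ioo (-ε) ε}
  have hS : IsPreconnected S :=
    ((convex_Ioo (-ε) ε).linear_preimage Complex.reLm).isPreconnected
  have h0S : (0 : ℂ) ∈ S := by simp [S, hε]
  have aμ : AnalyticOnNhd ℂ (complexMGF id μ) S := fun z hz =>
    analyticAt_complexMGF (hμ' (abs_lt.mpr hz))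
  have aν : AnalyticOnNhd ℂ (complexMGF id ν) S := fun z hz =>
    analyticAt_complexMGF (hν' (abs_lt.mpr hz))
  have horder : analyticOrderAt (complexMGF id μ - complexMGF id ν) 0 = ⊤ := by
    refine ENat.eq_top_iff_forall_ge.mpr fun m => ?_
    rw [natCast_le_analyticOrderAt_iff_iteratedDeriv_eq_zero ((aμ 0 h0S).sub (aν 0 h0S))]
    intro i _
    rw [iteratedDeriv_sub (aμ 0 h0S).contDiffAt (aν 0 h0S).contDiffAt,
      iteratedDeriv_complexMGF_id_zero (hμ' h0), iteratedDeriv_complexMGF_id_zero (hν' h0),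
      hmom i, sub_self]
  have hlocal : complexMGF id μ =ᶠ[𝓝 0] complexMGF id ν := by
    filter_upwards [analyticOrderAt_eq_top.mp horder] with z hz using sub_eq_zero.mp hz
  have hstrip := aμ.eqOn_of_preconnected_of_eventuallyEq aν hS h0S hlocal
  refine Measure.ext_of_charFun (funext fun t => ?_)
  rw [← complexMGF_id_mul_I, ← complexMGF_id_mul_I]
  exact hstrip (by simp [S, hε])

end Cramer

/-- Hardy's condition for a Stieltjes moment problem on `[-c, ∞)`: the measure `μ` is carried by
this half-line and `exp (ε √(x + c))` is `μ`-integrable for some `ε > 0`. -/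
def IsHardy (c : ℝ) (μ : Measure ℝ) : Prop :=
  (∀ᵐ x ∂μ, -c ≤ x) ∧ ∃ ε : ℝ, 0 < ε ∧ Integrable (fun x => Real.exp (ε * √(x + c))) μ

/-- The image of `μ` under `x ↦ √(x + c)`, symmetrised by adding its reflection at `0`. -/
noncomputable def symmSqrt (c : ℝ) (μ : Measure ℝ) : Measure ℝ :=
  μ.map (fun x => √(x + c)) + μ.map (fun x => -√(x + c))

instance (c : ℝ) (μ : Measure ℝ) [IsFiniteMeasure μ] : IsFiniteMeasure (symmSqrt c μ) := by
  unfold symmSqrt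
  infer_instance

section Stieltjes

variable {c ε : ℝ} {μ : Measure ℝ}

lemma integrable_exp_mul_sqrt_of_le {δ : ℝ} (hδ : δ ≤ ε)
    (h : Integrable (fun x => Real.exp (ε * √(x + c))) μ) :
    Integrable (fun x => Real.exp (δ * √(x + c))) μ := by
  refine h.mono' (by fun_prop) (.of_forall fun x => ?_)
  rw [Real.norm_eq_abs, Real.abs_exp]
  gcongr

lemma integrable_sqrt_pow_of_integrable_exp (hε : 0 < ε)
    (h : Integrable (fun x => Real.exp (ε * √(x + c))) μ) (n : ℕ) :
    Integrable (fun x => √(x + c) ^ n) μ := by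
  refine (h.const_mul (n.factorial / ε ^ n)).mono' (by fun_prop) (.of_forall fun x => ?_)
  rw [Real.norm_eq_abs, abs_of_nonneg (by positivity)]
  have := Real.pow_div_factorial_le_exp (ε * √(x + c)) (by positivity) n
  rw [mul_pow, div_le_iff₀ (by positivity)] at this
  rw [div_mul_eq_mul_div, le_div_iff₀ (by positivity)]
  linarith

lemma integrable_exp_mul_symmSqrt
    (h : Integrable (fun x => Real.exp (ε * √(x + c))) μ) {t : ℝ} (ht : |t| < ε) :
    Integrable (fun u => Real.exp (t * u)) (symmSqrt c μ) := by
  obtain ⟨hlt, hgt⟩ := abs_lt.mp ht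
  refine Integrable.add_measure ?_ ?_ <;> rw [integrable_map_measure (by fun_prop) (by fun_prop)]
  · exact integrable_exp_mul_sqrt_of_le hgt.le h
  · simpa [Function.comp_def] using integrable_exp_mul_sqrt_of_le (δ := -t) (by linarith) h

lemma integral_pow_symmSqrt {n : ℕ} (h : Integrable (fun x => √(x + c) ^ n) μ) :
    ∫ u, u ^ n ∂(symmSqrt c μ) = (1 + (-1) ^ n) * ∫ x, √(x + c) ^ n ∂μ := by
  have hneg : ∀ x : ℝ, (-√(x + c)) ^ n = (-1) ^ n * √(x + c) ^ n := fun x => neg_pow _ n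
  rw [symmSqrt, integral_add_measure, integral_map (by fun_prop) (by fun_prop),
    integral_map (by fun_prop) (by fun_prop)]
  · simp only [hneg]
    rw [integral_const_mul, add_mul, one_mul]
  · rw [integrable_map_measure (by fun_prop) (by fun_prop)]
    exact h
  · rw [integrable_map_measure (by fun_prop) (by fun_prop)]
    simpa only [Function.comp_def, hneg] using h.const_mul ((-1) ^ n)

lemma integral_sqrt_pow_add_self (h : ∀ᵐ x ∂μ, -c ≤ x) (n : ℕ) :
    ∫ x, √(x + c) ^ (n + n) ∂μ = ∫ x, ((X + C c) ^ n : ℝ[X]).eval x ∂μ := by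
  refine integral_congr_ae ?_
  filter_upwards [h] with x hx
  rw [← two_mul, pow_mul, Real.sq_sqrt (by linarith)]
  simp

lemma map_symmSqrt (h : ∀ᵐ x ∂μ, -c ≤ x) :
    (symmSqrt c μ).map (fun u => u ^ 2 - c) = μ + μ := by
  have hid : ∀ f : ℝ → ℝ, Measurable f → (∀ x, f x ^ 2 = √(x + c) ^ 2) →
      (μ.map f).map (fun u => u ^ 2 - c) = μ := by
    intro f hf hsq
    rw [Measure.map_map (by fun_prop) hf, Measure.map_congr (g := id), Measure.map_id]
    filter_upwards [h] with x hx
    simp [hsq, Real.sq_sqrt (by linarith : 0 ≤ x + c)]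
  rw [symmSqrt, Measure.map_add _ _ (by fun_prop), hid _ (by fun_prop) fun _ => rfl,
    hid _ (by fun_prop) fun _ => neg_sq _]

end Stieltjes

namespace IsHardy

variable {c : ℝ} {μ ν : Measure ℝ}

lemma eq_of_integral_eval_eq [IsFiniteMeasure μ] [IsFiniteMeasure ν]
    (hμ : IsHardy c μ) (hν : IsHardy c ν)
    (hmom : ∀ p : ℝ[X], ∫ x, p.eval x ∂μ = ∫ x, p.eval x ∂ν) : μ = ν := by
  obtain ⟨sμ, ε₁, hε₁, iμ⟩ := hμ
  obtain ⟨sν, ε₂, hε₂, iν⟩ := hν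
  have hε : 0 < min ε₁ ε₂ := lt_min hε₁ hε₂
  replace iμ := integrable_exp_mul_sqrt_of_le (min_le_left ε₁ ε₂) iμ
  replace iν := integrable_exp_mul_sqrt_of_le (min_le_right ε₁ ε₂) iν
  have hsymm : symmSqrt c μ = symmSqrt c ν := by
    refine eq_of_integral_pow_eq_of_integrable_exp hε
      (fun _ => integrable_exp_mul_symmSqrt iμ) (fun _ => integrable_exp_mul_symmSqrt iν)
      fun n => ?_
    rw [integral_pow_symmSqrt (integrable_sqrt_pow_of_integrable_exp hε iμ n),
      integral_pow_symmSqrt (integrable_sqrt_pow_of_integrable_exp hε iν n)]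
    rcases n.even_or_odd with ⟨m, rfl⟩ | hodd
    · rw [integral_sqrt_pow_add_self sμ, integral_sqrt_pow_add_self sν, hmom]
    · simp [hodd.neg_one_pow]
  have hdouble : μ + μ = ν + ν := by rw [← map_symmSqrt sμ, hsymm, map_symmSqrt sν]
  ext s -
  have hs := congrArg (· s) hdouble
  simp only [Measure.add_apply, ← two_mul] at hs
  exact (ENNReal.mul_right_inj (by norm_num) (by norm_num)).mp hs

lemma hasFiniteMoments [IsFiniteMeasure μ] (h : IsHardy c μ) : HasFiniteMoments μ := by
  obtain ⟨hs, ε, hε, hi⟩ := h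
  have hpow : ∀ n : ℕ, Integrable (fun x => (x + c) ^ n) μ := fun n => by
    refine (integrable_sqrt_pow_of_integrable_exp hε hi (2 * n)).congr ?_
    filter_upwards [hs] with x hx
    rw [pow_mul, Real.sq_sqrt (by linarith)]
  refine HasFiniteMoments.of_integrable_eval fun p => ?_
  have hshift : ∀ x, p.eval x = (p.comp (X - C c)).eval (x + c) := fun x => by simp
  simp only [hshift, eval_eq_sum_range]
  exact integrable_finsetSum _ fun i _ => (hpow i).const_mul _

lemma withDensity (h : IsHardy c μ) {w : ℝ → ℝ} (hw : MemLp w 2 μ) (hw0 : ∀ x, 0 ≤ w x) :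
    IsHardy c (μ.withDensity fun x => ENNReal.ofReal (w x)) := by
  obtain ⟨hs, ε, hε, hi⟩ := h
  have hexp : MemLp (fun x => Real.exp (ε / 2 * √(x + c))) 2 μ := by
    rw [memLp_two_iff_integrable_sq (by fun_prop)]
    convert hi using 2 with x
    rw [← Real.exp_nat_mul]
    congr 1
    push_cast
    ring
  refine ⟨(withDensity_absolutelyContinuous _ _).ae_le hs, ε / 2, by positivity, ?_⟩
  rw [integrable_withDensity_iff_integrable_smul₀'
    hw.aestronglyMeasurable.aemeasurable.ennreal_ofReal (by simp)]
  simp only [ENNReal.toReal_ofReal (hw0 _), smul_eq_mul]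
  exact hw.integrable_mul hexp

end IsHardy

section WeightedIntegrals

variable {μ : Measure ℝ}

lemma integral_withDensity_ofReal {w : ℝ → ℝ} (hw : AEMeasurable w μ) (hw0 : ∀ x, 0 ≤ w x)
    (f : ℝ → ℝ) :
    ∫ x, f x ∂(μ.withDensity fun x => ENNReal.ofReal (w x)) = ∫ x, w x * f x ∂μ := by
  rw [integral_withDensity_eq_integral_toReal_smul₀ hw.ennreal_ofReal (by simp)]
  simp [ENNReal.toReal_ofReal (hw0 _)]

lemma abs_integral_le_of_integral_sq_le [IsFiniteMeasure μ] {f : ℝ → ℝ} (hf : MemLp f 2 μ)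
    {a : ℝ} (ha : 0 < a) (h : ∫ x, f x ^ 2 ∂μ ≤ a ^ 2) :
    |∫ x, f x ∂μ| ≤ a * (μ.real Set.univ + 1) / 2 := by
  have hpoint : ∀ x, |f x| ≤ a / 2 + f x ^ 2 / (2 * a) := fun x => by
    rw [← sub_nonneg]
    have : a / 2 + f x ^ 2 / (2 * a) - |f x| = (|f x| - a) ^ 2 / (2 * a) := by
      rw [← sq_abs (f x)]
      field_simp
      ring
    rw [this]
    positivity
  have hint := (integrable_const (μ := μ) (a / 2)).add (hf.integrable_sq.div_const (2 * a))
  calc |∫ x, f x ∂μ| ≤ ∫ x, |f x| ∂μ := abs_integral_le_integral_abs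
    _ ≤ ∫ x, (a / 2 + f x ^ 2 / (2 * a)) ∂μ :=
      integral_mono (hf.integrable (by norm_num)).abs hint hpoint
    _ = a * μ.real Set.univ / 2 + (∫ x, f x ^ 2 ∂μ) / (2 * a) := by
      rw [integral_add (integrable_const _) (hf.integrable_sq.div_const _), integral_const,
        integral_div, smul_eq_mul]
      ring
    _ ≤ a * μ.real Set.univ / 2 + a ^ 2 / (2 * a) := by gcongr
    _ = a * (μ.real Set.univ + 1) / 2 := by
      field_simp

end WeightedIntegrals

namespace IsHardy

variable {c : ℝ} {μ : Measure ℝ} [IsFiniteMeasure μ]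

-- The densities `f⁺` and `f⁻` give two Hardy measures with the same moments.
lemma ae_eq_zero_of_integral_mul_eval_eq_zero (h : IsHardy c μ) {f : ℝ → ℝ} (hf : MemLp f 2 μ)
    (horth : ∀ p : ℝ[X], ∫ x, f x * p.eval x ∂μ = 0) : f =ᵐ[μ] 0 := by
  have hpos : MemLp (fun x => max (f x) 0) 2 μ := hf.pos_part
  have hneg : MemLp (fun x => max (-f x) 0) 2 μ := hf.neg_part
  have ipos := hpos.integrable (by norm_num)
  have ineg := hneg.integrable (by norm_num)
  have := isFiniteMeasure_withDensity_ofReal ipos.2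
  have := isFiniteMeasure_withDensity_ofReal ineg.2
  have heq := (h.withDensity hpos fun _ => le_max_right _ _).eq_of_integral_eval_eq
    (h.withDensity hneg fun _ => le_max_right _ _) fun p => by
      have hp := h.hasFiniteMoments.memLp_two_eval p
      have hposp : Integrable (fun x => max (f x) 0 * p.eval x) μ := hpos.integrable_mul hp
      have hnegp : Integrable (fun x => max (-f x) 0 * p.eval x) μ := hneg.integrable_mul hp
      rw [integral_withDensity_ofReal ipos.aemeasurable fun _ => le_max_right _ _,
        integral_withDensity_ofReal ineg.aemeasurable fun _ => le_max_right _ _, ← sub_eq_zero,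
        ← integral_sub hposp hnegp]
      simpa only [← sub_mul, max_zero_sub_max_neg_zero_eq_self] using horth p
  rw [withDensity_eq_iff ipos.aemeasurable.ennreal_ofReal ineg.aemeasurable.ennreal_ofReal
    ((lintegral_ofReal_le_lintegral_enorm _).trans_lt ipos.2).ne] at heq
  filter_upwards [heq] with x hx
  rw [ENNReal.ofReal_eq_ofReal_iff (le_max_right _ _) (le_max_right _ _)] at hx
  rw [← max_zero_sub_max_neg_zero_eq_self (f x), hx, sub_self, Pi.zero_apply]

/-- Polynomials as elements of `L²(μ)`. -/
noncomputable def evalLp (h : IsHardy c μ) : ℝ[X] →ₗ[ℝ] Lp ℝ 2 μ where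
  toFun p := (h.hasFiniteMoments.memLp_two_eval p).toLp _
  map_add' p r := by
    rw [← MemLp.toLp_add]
    congr 1
    ext x
    simp
  map_smul' a p := by
    rw [RingHom.id_apply, ← MemLp.toLp_const_smul]
    congr 1
    ext x
    simp

lemma coeFn_evalLp (h : IsHardy c μ) (p : ℝ[X]) : h.evalLp p =ᵐ[μ] fun x => p.eval x :=
  (h.hasFiniteMoments.memLp_two_eval p).coeFn_toLp

lemma topologicalClosure_range_evalLp (h : IsHardy c μ) :
    h.evalLp.range.topologicalClosure = ⊤ := by
  rw [Submodule.topologicalClosure_eq_top_iff, Submodule.eq_bot_iff]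
  intro F hF
  rw [Lp.eq_zero_iff_ae_eq_zero]
  refine h.ae_eq_zero_of_integral_mul_eval_eq_zero (Lp.memLp F) fun p => ?_
  have hinner : ∫ x, inner ℝ (F x) (h.evalLp p x) ∂μ = 0 :=
    (L2.inner_def F (h.evalLp p)).symm.trans ((Submodule.mem_orthogonal' _ _).mp hF _ ⟨p, rfl⟩)
  rw [← hinner]
  refine integral_congr_ae ?_
  filter_upwards [h.coeFn_evalLp p] with x hx
  simp [hx, mul_comm]

lemma exists_integral_sq_sub_eval_lt (h : IsHardy c μ) {g : ℝ → ℝ} (hg : MemLp g 2 μ)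
    {δ : ℝ} (hδ : 0 < δ) : ∃ p : ℝ[X], ∫ x, (g x - p.eval x) ^ 2 ∂μ < δ := by
  have hmem : hg.toLp g ∈ closure (h.evalLp.range : Set (Lp ℝ 2 μ)) := by
    rw [← Submodule.topologicalClosure_coe, h.topologicalClosure_range_evalLp]
    trivial
  obtain ⟨_, ⟨p, rfl⟩, hp⟩ := Metric.mem_closure_iff.mp hmem (√δ) (by positivity)
  refine ⟨p, ?_⟩
  rw [dist_eq_norm, Real.lt_sqrt (norm_nonneg _), ← real_inner_self_eq_norm_sq,
    L2.inner_def] at hp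
  convert hp using 1
  refine integral_congr_ae ?_
  filter_upwards [hg.coeFn_toLp, h.coeFn_evalLp p, Lp.coeFn_sub (hg.toLp g) (h.evalLp p)]
    with x hgx hpx hsub
  rw [hsub, Pi.sub_apply, hgx, hpx]
  simp [sq]

lemma exists_integral_eval_mul_sq_sub_eval_lt (h : IsHardy c μ) (g : BoundedContinuousFunction ℝ ℝ)
    {w : ℝ[X]} (hw : ∀ x, 0 ≤ w.eval x) {δ : ℝ} (hδ : 0 < δ) :
    ∃ p : ℝ[X], ∫ x, w.eval x * (g x - p.eval x) ^ 2 ∂μ < δ := by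
  have hwint := h.hasFiniteMoments.integrable_eval w
  have := isFiniteMeasure_withDensity_ofReal hwint.2
  have hg : MemLp g 2 (μ.withDensity fun x => ENNReal.ofReal (w.eval x)) :=
    .of_bound g.continuous.aestronglyMeasurable ‖g‖ (.of_forall g.norm_coe_le_norm)
  obtain ⟨p, hp⟩ := (h.withDensity (h.hasFiniteMoments.memLp_two_eval w)
    hw).exists_integral_sq_sub_eval_lt hg hδ
  rw [integral_withDensity_ofReal hwint.aemeasurable hw] at hp
  exact ⟨p, hp⟩

end IsHardy

/-- The algebra of bounded functions of the form `P(x) / (1 + x²)ᵏ` with `P` a polynomial; it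
separates points, hence determines finite measures on `ℝ`. -/
def polynomialQuotients : StarSubalgebra ℝ (BoundedContinuousFunction ℝ ℝ) where
  carrier := {f | ∃ (k : ℕ) (P : ℝ[X]), ∀ x, f x * (1 + x ^ 2) ^ k = P.eval x}
  mul_mem' := by
    rintro f g ⟨k, P, hP⟩ ⟨l, R, hR⟩
    refine ⟨k + l, P * R, fun x => ?_⟩
    rw [eval_mul, ← hP, ← hR, BoundedContinuousFunction.mul_apply]
    ring
  add_mem' := by
    rintro f g ⟨k, P, hP⟩ ⟨l, R, hR⟩
    refine ⟨k + l, P * (1 + X ^ 2) ^ l + R * (1 + X ^ 2) ^ k, fun x => ?_⟩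
    simp only [eval_add, eval_mul, eval_pow, eval_one, eval_X, ← hP, ← hR,
      BoundedContinuousFunction.add_apply]
    ring
  algebraMap_mem' r := ⟨0, C r, fun x => by simp⟩
  star_mem' := by
    rintro f ⟨k, P, hP⟩
    exact ⟨k, P, fun x => by simpa using hP x⟩

lemma exists_polynomialQuotients_apply_eq {N : ℝ[X]} {B : ℝ}
    (hN : ∀ x, |N.eval x| ≤ B * (1 + x ^ 2)) :
    ∃ f ∈ polynomialQuotients, ∀ x, f x = N.eval x / (1 + x ^ 2) := by
  have hne : ∀ x : ℝ, 1 + x ^ 2 ≠ 0 := fun x => by positivity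
  refine ⟨.ofNormedAddCommGroup (fun x => N.eval x / (1 + x ^ 2))
    (by fun_prop (disch := exact hne _)) B fun x => ?_, ⟨1, N, fun x => ?_⟩, fun x => rfl⟩
  · rw [Real.norm_eq_abs, abs_div, abs_of_pos (by positivity : 0 < 1 + x ^ 2),
      div_le_iff₀ (by positivity)]
    exact hN x
  · simp [hne]

lemma separatesPoints_polynomialQuotients :
    (polynomialQuotients.map
      (BoundedContinuousFunction.toContinuousMapStarₐ ℝ)).SeparatesPoints := by
  obtain ⟨u, hu, hux⟩ := exists_polynomialQuotients_apply_eq (N := 1) (B := 1)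
    fun x => by simpa using sq_nonneg x
  obtain ⟨v, hv, hvx⟩ := exists_polynomialQuotients_apply_eq (N := X) (B := 1)
    fun x => by simpa using by nlinarith [sq_nonneg (|x| - 1), sq_abs x]
  intro x y hxy
  by_cases huxy : u x = u y
  · refine ⟨_, ⟨_, ⟨v, hv, rfl⟩, rfl⟩, fun hvxy => hxy ?_⟩
    replace hvxy : v x = v y := hvxy
    simp only [hux, eval_one, hvx, eval_X, div_eq_mul_inv, one_mul] at huxy hvxy
    rw [huxy] at hvxy
    exact mul_right_cancel₀ (by positivity) hvxy
  · exact ⟨_, ⟨_, ⟨u, hu, rfl⟩, rfl⟩, huxy⟩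

namespace IsHardy

variable {c : ℝ} {μ ν : Measure ℝ} [IsFiniteMeasure μ] [IsFiniteMeasure ν]

-- M. Riesz: if `f w = P` with `w = (1 + x²)ᵏ`, then `∫ w² (f - p)² = ∫ (P - w p)²` is a moment,
-- so an approximation of `f` by `p` in `L²(w² μ)` is one in `L²(w² ν)` as well.
lemma integral_eq_of_mem_polynomialQuotients (h : IsHardy c μ) (hν : HasFiniteMoments ν)
    (hmom : ∀ p : ℝ[X], ∫ x, p.eval x ∂ν = ∫ x, p.eval x ∂μ)
    {f : BoundedContinuousFunction ℝ ℝ} (hf : f ∈ polynomialQuotients) :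
    ∫ x, f x ∂ν = ∫ x, f x ∂μ := by
  obtain ⟨k, P, hP⟩ := hf
  let w : ℝ[X] := (1 + X ^ 2) ^ k
  have hw : ∀ x, w.eval x = (1 + x ^ 2) ^ k := fun x => by simp [w]
  have hw1 : ∀ x, 1 ≤ w.eval x ^ 2 := fun x => by
    rw [hw, ← pow_mul]
    exact one_le_pow₀ (by nlinarith [sq_nonneg x])
  have hclose : ∀ a > 0, ∀ κ : Measure ℝ, ∀ p : ℝ[X], [IsFiniteMeasure κ] → HasFiniteMoments κ →
      ∫ x, ((P - w * p) ^ 2).eval x ∂κ < a ^ 2 →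
      |∫ x, f x ∂κ - ∫ x, p.eval x ∂κ| ≤ a * (κ.real Set.univ + 1) / 2 := by
    intro a ha κ p _ hκ hp
    have hfp : MemLp (fun x => f x - p.eval x) 2 κ :=
      (MemLp.of_bound f.continuous.aestronglyMeasurable ‖f‖ (.of_forall f.norm_coe_le_norm)).sub
        (hκ.memLp_two_eval p)
    rw [← integral_sub (f.integrable κ) (hκ.integrable_eval p)]
    refine abs_integral_le_of_integral_sq_le hfp ha (le_trans ?_ hp.le)
    refine integral_mono hfp.integrable_sq (hκ.integrable_eval _) fun x => ?_
    calc (f x - p.eval x) ^ 2 ≤ w.eval x ^ 2 * (f x - p.eval x) ^ 2 :=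
          le_mul_of_one_le_left (sq_nonneg _) (hw1 x)
      _ = ((P - w * p) ^ 2).eval x := by
          simp only [eval_pow, eval_sub, eval_mul, ← hP, hw]
          ring
  have hsmall : ∀ a > 0, |∫ x, f x ∂ν - ∫ x, f x ∂μ| ≤
      a * ((ν.real Set.univ + 1) / 2 + (μ.real Set.univ + 1) / 2) := by
    intro a ha
    obtain ⟨p, hp⟩ := h.exists_integral_eval_mul_sq_sub_eval_lt f (w := w ^ 2)
      (fun x => by simpa using sq_nonneg (w.eval x)) (pow_pos ha 2)
    have hpμ : ∫ x, ((P - w * p) ^ 2).eval x ∂μ < a ^ 2 := by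
      convert hp using 3 with x
      simp only [eval_pow, eval_sub, eval_mul, ← hP, hw]
      ring
    have h₁ := hclose a ha μ p h.hasFiniteMoments hpμ
    have h₂ := hclose a ha ν p hν (hmom _ ▸ hpμ)
    rw [hmom] at h₂
    rw [abs_le] at h₁ h₂ ⊢
    constructor <;> linarith
  have hlim : Tendsto (fun a : ℝ => a * ((ν.real Set.univ + 1) / 2 + (μ.real Set.univ + 1) / 2))
      (𝓝[>] 0) (𝓝 0) := by
    refine (Continuous.tendsto' (by fun_prop) 0 0 (by simp)).mono_left nhdsWithin_le_nhds
  exact sub_eq_zero.mp (abs_nonpos_iff.mp (ge_of_tendsto hlim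
    (eventually_nhdsWithin_of_forall hsmall)))

theorem eq_of_hasFiniteMoments (h : IsHardy c μ) (hν : HasFiniteMoments ν)
    (hmom : ∀ p : ℝ[X], ∫ x, p.eval x ∂ν = ∫ x, p.eval x ∂μ) : ν = μ :=
  ext_of_forall_mem_subalgebra_integral_eq_of_polish separatesPoints_polynomialQuotients
    fun _ => h.integral_eq_of_mem_polynomialQuotients hν hmom

end IsHardy

section WeakConvergence

lemma isTightMeasureSet_of_lintegral_enorm_le {E : Type*} [NormedAddCommGroup E] [ProperSpace E]
    [MeasurableSpace E] [BorelSpace E] {S : Set (Measure E)} {B : ENNReal} (hB : B ≠ ⊤)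
    (h : ∀ μ ∈ S, ∫⁻ x, ‖x‖ₑ ∂μ ≤ B) : IsTightMeasureSet S := by
  refine isTightMeasureSet_of_tendsto_measure_norm_gt ?_
  have hlim : Tendsto (fun r : ℝ => B / ENNReal.ofReal r) atTop (𝓝 0) :=
    by simpa using ENNReal.Tendsto.const_div ENNReal.tendsto_ofReal_atTop (.inr hB)
  refine tendsto_of_tendsto_of_tendsto_of_le_of_le' tendsto_const_nhds hlim
    (.of_forall fun _ => zero_le) ?_
  filter_upwards [eventually_gt_atTop 0] with r hr
  refine iSup₂_le fun μ hμ => ?_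
  calc μ {x | r < ‖x‖} ≤ μ {x | ENNReal.ofReal r ≤ ‖x‖ₑ} := measure_mono fun x (hx : r < ‖x‖) => by
        rw [Set.mem_ofPred_eq, ← ofReal_norm]
        exact ENNReal.ofReal_le_ofReal hx.le
    _ ≤ (∫⁻ x, ‖x‖ₑ ∂μ) / ENNReal.ofReal r :=
        meas_ge_le_lintegral_div (by fun_prop) (by simpa using hr) ENNReal.ofReal_ne_top
    _ ≤ B / ENNReal.ofReal r := by gcongr; exact h μ hμ

variable {Ω : Type*} [MeasurableSpace Ω] {f : Ω → ℝ} {D : ℝ}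

/-- The truncation of a real number to the interval `[-R, R]`. -/
def clamp (R y : ℝ) : ℝ := max (-R) (min y R)

lemma abs_clamp_le {R : ℝ} (hR : 0 ≤ R) (y : ℝ) : |clamp R y| ≤ R :=
  abs_le.mpr ⟨le_max_left _ _, max_le (by linarith) (min_le_right _ _)⟩

lemma abs_sub_clamp_le {R : ℝ} (hR : 0 < R) (y : ℝ) : |y - clamp R y| ≤ y ^ 2 / R := by
  rw [le_div_iff₀ hR, clamp]
  rcases lt_or_ge y (-R) with hlow | hlow
  · rw [min_eq_left (by linarith), max_eq_left hlow.le, abs_of_neg (by linarith)]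
    nlinarith
  rcases le_or_gt y R with hupp | hupp
  · rw [min_eq_left hupp, max_eq_right hlow, sub_self, abs_zero, zero_mul]
    positivity
  · rw [min_eq_right hupp.le, max_eq_right (by linarith), abs_of_pos (by linarith)]
    nlinarith

lemma abs_integral_sub_integral_clamp_le {μ : Measure Ω} [IsProbabilityMeasure μ]
    (hf : MemLp f 2 μ) (hD : ∫ x, f x ^ 2 ∂μ ≤ D) {R : ℝ} (hR : 0 < R) :
    |∫ x, f x ∂μ - ∫ x, clamp R (f x) ∂μ| ≤ D / R := by
  have hclamp : Integrable (fun x => clamp R (f x)) μ :=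
    .of_bound (by have := hf.aestronglyMeasurable; unfold clamp; fun_prop) R
      (.of_forall fun x => abs_clamp_le hR.le _)
  have hfint := hf.integrable (by norm_num)
  rw [← integral_sub hfint hclamp]
  calc |∫ x, (f x - clamp R (f x)) ∂μ| ≤ ∫ x, |f x - clamp R (f x)| ∂μ :=
        abs_integral_le_integral_abs
    _ ≤ ∫ x, f x ^ 2 / R ∂μ := integral_mono (hfint.sub hclamp).abs
        (hf.integrable_sq.div_const R) fun x => abs_sub_clamp_le hR (f x)
    _ = (∫ x, f x ^ 2 ∂μ) / R := integral_div _ _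
    _ ≤ D / R := by gcongr

variable [TopologicalSpace Ω] [OpensMeasurableSpace Ω]
  {κ : ℕ → ProbabilityMeasure Ω} {σ : ProbabilityMeasure Ω}

lemma integrable_of_tendsto_of_integral_abs_le [HasOuterApproxClosed Ω]
    (hκ : Tendsto κ atTop (𝓝 σ)) (hf : Continuous f)
    (hint : ∀ n, Integrable f (κ n : Measure Ω)) (hD : ∀ n, ∫ x, |f x| ∂(κ n : Measure Ω) ≤ D) :
    Integrable f (σ : Measure Ω) := by
  refine ⟨hf.measurable.aestronglyMeasurable, hasFiniteIntegral_iff_norm f |>.mpr ?_⟩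
  calc ∫⁻ x, ENNReal.ofReal ‖f x‖ ∂(σ : Measure Ω)
      ≤ atTop.liminf fun n => ∫⁻ x, ENNReal.ofReal ‖f x‖ ∂(κ n : Measure Ω) :=
        lintegral_le_liminf_lintegral_of_forall_isOpen_measure_le_liminf_measure hf.norm
          (fun x => norm_nonneg (f x))
          fun G => ProbabilityMeasure.le_liminf_measure_open_of_tendsto hκ
    _ ≤ ENNReal.ofReal D := liminf_le_of_frequently_le' <| .of_forall fun n => by
        rw [← ofReal_integral_eq_lintegral_ofReal (hint n).norm (.of_forall fun _ => norm_nonneg _)]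
        exact ENNReal.ofReal_le_ofReal (hD n)
    _ < ⊤ := ENNReal.ofReal_lt_top

-- Truncation costs at most `D / R`, uniformly along the sequence.
lemma tendsto_integral_of_integral_sq_le [HasOuterApproxClosed Ω]
    (hκ : Tendsto κ atTop (𝓝 σ)) (hf : Continuous f)
    (hint : ∀ n, Integrable (fun x => f x ^ 2) (κ n : Measure Ω))
    (hD : ∀ n, ∫ x, f x ^ 2 ∂(κ n : Measure Ω) ≤ D) :
    Tendsto (fun n => ∫ x, f x ∂(κ n : Measure Ω)) atTop (𝓝 (∫ x, f x ∂(σ : Measure Ω))) := by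
  have hmem : ∀ μ : Measure Ω, Integrable (fun x => f x ^ 2) μ → MemLp f 2 μ := fun μ =>
    (memLp_two_iff_integrable_sq hf.measurable.aestronglyMeasurable).mpr
  have hσ : Integrable (fun x => f x ^ 2) (σ : Measure Ω) :=
    integrable_of_tendsto_of_integral_abs_le hκ (hf.pow 2) hint fun n => by simpa using hD n
  have hlim : ∀ E : ℝ, Tendsto (fun R : ℝ => E / R) atTop (𝓝 0) := fun E =>
    tendsto_const_nhds.div_atTop tendsto_id
  refine TendstoUniformly.tendsto_of_eventually_tendsto
    (F := fun R n => ∫ x, clamp R (f x) ∂(κ n : Measure Ω))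
    (L := fun R => ∫ x, clamp R (f x) ∂(σ : Measure Ω)) (p := atTop) ?_ ?_ ?_
  · refine Metric.tendstoUniformly_iff.mpr fun ε hε => ?_
    filter_upwards [(hlim D).eventually_lt_const hε, eventually_gt_atTop 0] with R hR hR0 n
    exact (abs_integral_sub_integral_clamp_le (hmem _ (hint n)) (hD n) hR0).trans_lt hR
  · filter_upwards [eventually_ge_atTop 0] with R hR
    exact ProbabilityMeasure.tendsto_iff_forall_integral_tendsto.mp hκ
      (.ofNormedAddCommGroup (fun x => clamp R (f x)) (by unfold clamp; fun_prop) R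
        fun x => abs_clamp_le hR _)
  · rw [tendsto_iff_norm_sub_tendsto_zero]
    refine squeeze_zero' (.of_forall fun _ => norm_nonneg _) ?_
      (hlim (∫ x, f x ^ 2 ∂(σ : Measure Ω)))
    filter_upwards [eventually_gt_atTop 0] with R hR
    rw [norm_sub_rev]
    exact abs_integral_sub_integral_clamp_le (hmem _ hσ) le_rfl hR

end WeakConvergence

section MethodOfMoments

variable {κ : ℕ → ProbabilityMeasure ℝ} {M : ℕ → ℝ}

lemma exists_subseq_tendsto_of_integral_abs_le {B : ℝ}
    (hint : ∀ n, Integrable (fun x => x) (κ n : Measure ℝ))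
    (hB : ∀ n, ∫ x, |x| ∂(κ n : Measure ℝ) ≤ B) :
    ∃ (σ : ProbabilityMeasure ℝ) (φ : ℕ → ℕ), StrictMono φ ∧ Tendsto (κ ∘ φ) atTop (𝓝 σ) := by
  have htight : IsTightMeasureSet {((μ : ProbabilityMeasure ℝ) : Measure ℝ) | μ ∈ Set.range κ} := by
    refine isTightMeasureSet_of_lintegral_enorm_le (B := ENNReal.ofReal B) (by simp) ?_
    rintro _ ⟨_, ⟨n, rfl⟩, rfl⟩
    simp only [← ofReal_norm]
    rw [← ofReal_integral_eq_lintegral_ofReal (hint n).norm (.of_forall fun _ => norm_nonneg _)]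
    exact ENNReal.ofReal_le_ofReal (hB n)
  obtain ⟨σ, -, φ, hφ, hσ⟩ := (isCompact_closure_of_isTightMeasureSet htight).tendsto_subseq
    fun n => subset_closure (Set.mem_range_self n)
  exact ⟨σ, φ, hφ, hσ⟩

lemma integral_eval_le_of_integral_abs_pow_le {μ : Measure ℝ} (hμ : HasFiniteMoments μ)
    (hM : ∀ k, ∫ x, |x| ^ k ∂μ ≤ M k) (p : ℝ[X]) :
    ∫ x, p.eval x ∂μ ≤ ∑ i ∈ Finset.range (p.natDegree + 1), |p.coeff i| * M i := by
  have hterm : ∀ i, Integrable (fun x => |p.coeff i| * |x| ^ i) μ := fun i => (hμ i).const_mul _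
  calc ∫ x, p.eval x ∂μ
      ≤ ∫ x, ∑ i ∈ Finset.range (p.natDegree + 1), |p.coeff i| * |x| ^ i ∂μ := by
        refine integral_mono (hμ.integrable_eval p) (integrable_finsetSum _ fun i _ => hterm i)
          fun x => ?_
        simp only [eval_eq_sum_range, ← abs_pow, ← abs_mul]
        exact Finset.sum_le_sum fun i _ => le_abs_self _
    _ = ∑ i ∈ Finset.range (p.natDegree + 1), |p.coeff i| * ∫ x, |x| ^ i ∂μ := by
        rw [integral_finsetSum _ fun i _ => hterm i]
        simp only [integral_const_mul]
    _ ≤ ∑ i ∈ Finset.range (p.natDegree + 1), |p.coeff i| * M i := by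
        gcongr with i
        exact hM i

lemma hasFiniteMoments_of_tendsto {σ : ProbabilityMeasure ℝ} (hσ : Tendsto κ atTop (𝓝 σ))
    (hκ : ∀ n, HasFiniteMoments (κ n : Measure ℝ))
    (hM : ∀ n k, ∫ x, |x| ^ k ∂(κ n : Measure ℝ) ≤ M k) : HasFiniteMoments (σ : Measure ℝ) :=
  fun k => integrable_of_tendsto_of_integral_abs_le hσ (by fun_prop) (fun n => hκ n k)
    fun n => by simpa using hM n k

lemma tendsto_integral_eval_of_tendsto {σ : ProbabilityMeasure ℝ} (hσ : Tendsto κ atTop (𝓝 σ))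
    (hκ : ∀ n, HasFiniteMoments (κ n : Measure ℝ))
    (hM : ∀ n k, ∫ x, |x| ^ k ∂(κ n : Measure ℝ) ≤ M k) (p : ℝ[X]) :
    Tendsto (fun n => ∫ x, p.eval x ∂(κ n : Measure ℝ)) atTop
      (𝓝 (∫ x, p.eval x ∂(σ : Measure ℝ))) :=
  tendsto_integral_of_integral_sq_le hσ p.continuous
    (fun n => (memLp_two_iff_integrable_sq (by fun_prop)).mp ((hκ n).memLp_two_eval p)) fun n => by
      simp only [← eval_pow]
      exact integral_eval_le_of_integral_abs_pow_le (hκ n) (hM n) (p ^ 2)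

lemma ae_nonneg_of_tendsto {σ : ProbabilityMeasure ℝ} (hσ : Tendsto κ atTop (𝓝 σ))
    (h0 : ∀ n, ∀ᵐ x ∂(κ n : Measure ℝ), 0 ≤ x) : ∀ᵐ x ∂(σ : Measure ℝ), 0 ≤ x := by
  rw [ae_iff, ← nonpos_iff_eq_zero]
  simp only [not_le]
  refine (ProbabilityMeasure.le_liminf_measure_open_of_tendsto hσ isOpen_Iio).trans ?_
  refine liminf_le_of_frequently_le' (.of_forall fun n => ?_)
  exact (measure_mono fun x (hx : x < 0) => not_le.mpr hx).trans (ae_iff.mp (h0 n)).le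

theorem exists_measure_integral_eval_eq (h0 : ∀ n, ∀ᵐ x ∂(κ n : Measure ℝ), 0 ≤ x)
    (hκ : ∀ n, HasFiniteMoments (κ n : Measure ℝ))
    (hM : ∀ n k, ∫ x, x ^ k ∂(κ n : Measure ℝ) ≤ M k) :
    ∃ σ : Measure ℝ, IsProbabilityMeasure σ ∧ (∀ᵐ x ∂σ, 0 ≤ x) ∧ HasFiniteMoments σ ∧
      (∀ k, ∫ x, x ^ k ∂σ ≤ M k) ∧
      ∀ (p : ℝ[X]) (a : ℝ), Tendsto (fun n => ∫ x, p.eval x ∂(κ n : Measure ℝ)) atTop (𝓝 a) →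
        ∫ x, p.eval x ∂σ = a := by
  have habs : ∀ n k, ∫ x, |x| ^ k ∂(κ n : Measure ℝ) ≤ M k := fun n k => by
    refine (integral_congr_ae ?_).trans_le (hM n k)
    filter_upwards [h0 n] with x hx
    rw [abs_of_nonneg hx]
  obtain ⟨σ, φ, hφ, hσ⟩ := exists_subseq_tendsto_of_integral_abs_le
    (fun n => by simpa using (hκ n).integrable_eval X) (fun n => by simpa using habs n 1)
  have hlim := tendsto_integral_eval_of_tendsto hσ (fun n => hκ (φ n)) fun n => habs (φ n)
  refine ⟨σ, inferInstance, ae_nonneg_of_tendsto hσ fun n => h0 (φ n),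
    hasFiniteMoments_of_tendsto hσ (fun n => hκ (φ n)) fun n => habs (φ n), fun k => ?_,
    fun p a hp => tendsto_nhds_unique (hlim p) (hp.comp hφ.tendsto_atTop)⟩
  exact le_of_tendsto (by simpa using hlim (X ^ k)) (.of_forall fun n => hM (φ n) k)

end MethodOfMoments

section ThreeTerm

variable {R : Type*} [CommRing R]

/-- `P` is the family of monic polynomials with Jacobi coefficients `b` and `g`, that is
`P 0 = 1` and `X P n = P (n + 1) + b n P n + g n P (n - 1)`. The convention `P (-1) = 0` is encoded
by `g 0 = 0`, since `P (0 - 1)` is `P 0`. -/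
structure IsThreeTerm (b g : ℕ → R) (P : ℕ → R[X]) : Prop where
  coeff_zero : g 0 = 0
  zero : P 0 = 1
  X_mul (n : ℕ) : X * P n = P (n + 1) + C (b n) * P n + C (g n) * P (n - 1)

/-- The monic polynomials with Jacobi coefficients `b` and `g`. -/
noncomputable def threeTerm (b g : ℕ → R) : ℕ → R[X]
  | 0 => 1
  | 1 => X - C (b 0)
  | n + 2 => (X - C (b (n + 1))) * threeTerm b g (n + 1) - C (g (n + 1)) * threeTerm b g n

/-- The sequence `e` multiplied by the transposed Jacobi matrix of `B` and `Γ`: it holds the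
coordinates of `X * ∑ k, e k Q k` if `Q` has Jacobi coefficients `B` and `Γ`. -/
def jacobiRow (B Γ e : ℕ → R) : ℕ → R
  | 0 => B 0 * e 0 + Γ 1 * e 1
  | k + 1 => e k + B (k + 1) * e (k + 1) + Γ (k + 2) * e (k + 2)

variable {b g B Γ : ℕ → R} {P Q : ℕ → R[X]}

lemma isThreeTerm_threeTerm (hg : g 0 = 0) : IsThreeTerm b g (threeTerm b g) where
  coeff_zero := hg
  zero := rfl
  X_mul n := by
    rcases n with _ | n
    · simp [threeTerm, hg]
    · simp only [threeTerm, Nat.add_sub_cancel]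
      ring

namespace IsThreeTerm

lemma succ_eq (hP : IsThreeTerm b g P) (n : ℕ) :
    P (n + 1) = X * P n - C (b n) * P n - C (g n) * P (n - 1) := by
  linear_combination -hP.X_mul n

lemma eq_of_le (hP : IsThreeTerm b g P) {S : ℕ → R[X]} {M : ℕ} (hS0 : S 0 = 1)
    (hS : ∀ n < M, X * S n = S (n + 1) + C (b n) * S n + C (g n) * S (n - 1)) {n : ℕ}
    (hn : n ≤ M) : P n = S n := by
  induction n using Nat.strong_induction_on with
  | _ n ih =>
    rcases n with _ | n
    · rw [hP.zero, hS0]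
    · have hPn := hP.X_mul n
      rw [ih n n.lt_succ_self (by omega), ih (n - 1) (by omega) (by omega)] at hPn
      linear_combination hS n hn - hPn

lemma span_range_eq_top (hP : IsThreeTerm b g P) : Submodule.span R (Set.range P) = ⊤ := by
  set W := Submodule.span R (Set.range P)
  have hmem : ∀ n, P n ∈ W := fun n => Submodule.subset_span ⟨n, rfl⟩
  have hX : W ≤ W.comap (LinearMap.mulLeft R X) := Submodule.span_le.mpr <| by
    rintro _ ⟨n, rfl⟩
    simp only [Submodule.comap_coe, Set.mem_preimage, LinearMap.mulLeft_apply, hP.X_mul n, C_mul']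
    exact W.add_mem (W.add_mem (hmem _) (W.smul_mem _ (hmem _))) (W.smul_mem _ (hmem _))
  have hpow : ∀ n, (X ^ n : R[X]) ∈ W := fun n => by
    induction n with
    | zero => simpa [← hP.zero] using hmem 0
    | succ n ih => simpa [pow_succ'] using hX ih
  refine eq_top_iff.mpr fun p _ => ?_
  rw [p.as_sum_range_C_mul_X_pow]
  exact W.sum_mem fun i _ => by simpa [C_mul'] using W.smul_mem (p.coeff i) (hpow i)

lemma X_mul_sum_range (hQ : IsThreeTerm B Γ Q) {e : ℕ → R} {M : ℕ} (he : ∀ k, M ≤ k → e k = 0) :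
    X * ∑ k ∈ Finset.range (M + 1), C (e k) * Q k =
      ∑ k ∈ Finset.range (M + 1), C (jacobiRow B Γ e k) * Q k := by
  have hterm : ∀ k, X * (C (e k) * Q k) =
      C (e k) * Q (k + 1) + C (B k * e k) * Q k + C (Γ k * e k) * Q (k - 1) := fun k => by
    rw [mul_left_comm, hQ.X_mul k, C_mul, C_mul]
    ring
  have hup : ∑ k ∈ Finset.range (M + 1), C (e k) * Q (k + 1) =
      ∑ k ∈ Finset.range M, C (e k) * Q (k + 1) := by
    simp [Finset.sum_range_succ, he M le_rfl]
  have hdown : ∑ k ∈ Finset.range (M + 1), C (Γ k * e k) * Q (k - 1) =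
      ∑ k ∈ Finset.range (M + 1), C (Γ (k + 1) * e (k + 1)) * Q k := by
    rw [Finset.sum_range_succ', Finset.sum_range_succ _ M]
    simp [hQ.coeff_zero, he (M + 1) M.le_succ]
  rw [Finset.mul_sum, Finset.sum_congr rfl fun k _ => hterm k, Finset.sum_add_distrib,
    Finset.sum_add_distrib, hup, hdown, Finset.sum_range_succ' (fun k => C (B k * e k) * Q k),
    Finset.sum_range_succ' (fun k => C (Γ (k + 1) * e (k + 1)) * Q k),
    Finset.sum_range_succ' (fun k => C (jacobiRow B Γ e k) * Q k)]
  simp only [jacobiRow, C_add, add_mul, Finset.sum_add_distrib]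
  ring

theorem eq_sum_of_jacobiRow (hP : IsThreeTerm b g P) (hQ : IsThreeTerm B Γ Q) {d : ℕ → ℕ → R}
    (hd00 : d 0 0 = 1) (hd : ∀ n k, n < k → d n k = 0)
    (hrec : ∀ n k, d (n + 1) k + b n * d n k + g n * d (n - 1) k = jacobiRow B Γ (d n) k) (n : ℕ) :
    P n = ∑ k ∈ Finset.range (n + 1), C (d n k) * Q k := by
  refine hP.eq_of_le (S := fun m => ∑ k ∈ Finset.range (n + 1), C (d m k) * Q k) ?_
    (fun m hm => ?_) le_rfl
  · simp [Finset.sum_range_succ', hd00, hQ.zero, fun k => hd 0 (k + 1) k.succ_pos]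
  · rw [hQ.X_mul_sum_range fun k hk => hd m k (hm.trans_le hk)]
    simp only [← hrec, C_add, C_mul, add_mul, Finset.sum_add_distrib, Finset.mul_sum, mul_assoc]

end IsThreeTerm

end ThreeTerm

section Favard

open scoped InnerProductSpace

theorem exists_measure_integral_eval_eq_inner {E : Type*} [NormedAddCommGroup E]
    [InnerProductSpace ℝ E] [FiniteDimensional ℝ E] {T : E →ₗ[ℝ] E} (hT : T.IsPositive) {w : E}
    (hw : ‖w‖ = 1) :
    ∃ σ : Measure ℝ, IsProbabilityMeasure σ ∧ (∀ᵐ x ∂σ, 0 ≤ x) ∧ HasFiniteMoments σ ∧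
      ∀ p : ℝ[X], ∫ x, p.eval x ∂σ = ⟪w, aeval T p w⟫_ℝ := by
  set u := hT.isSymmetric.eigenvectorBasis rfl
  set ev := hT.isSymmetric.eigenvalues rfl
  have hint : ∀ (f : ℝ → ℝ) i,
      Integrable f (ENNReal.ofReal (⟪u i, w⟫_ℝ ^ 2) • Measure.dirac (ev i)) := fun f i =>
    (integrable_dirac (by simp)).smul_measure ENNReal.ofReal_ne_top
  refine ⟨∑ i, ENNReal.ofReal (⟪u i, w⟫_ℝ ^ 2) • Measure.dirac (ev i), ⟨?_⟩, ?_,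
    fun n => integrable_finsetSum_measure.mpr fun i _ => hint _ i, fun p => ?_⟩
  · have hsum : ∑ i, ⟪u i, w⟫_ℝ ^ 2 = 1 := by simpa [hw] using u.sum_sq_norm_inner_right w
    simp [← ENNReal.ofReal_sum_of_nonneg fun _ _ => sq_nonneg _, hsum]
  · rw [ae_iff, Measure.finsetSum_apply]
    refine Finset.sum_eq_zero fun i _ => ?_
    simp [ev, hT.nonneg_eigenvalues rfl i]
  · have hw' : aeval T p w = ∑ i, (⟪u i, w⟫_ℝ * p.eval (ev i)) • u i := by
      conv_lhs => rw [← u.sum_repr' w]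
      simp only [map_sum, map_smul, mul_smul]
      refine Finset.sum_congr rfl fun i _ => congrArg _ ?_
      exact Module.End.aeval_apply_of_hasEigenvector
        (hT.isSymmetric.hasEigenvector_eigenvectorBasis rfl i)
    rw [integral_finsetSum_measure fun i _ => hint _ i, hw', inner_sum]
    refine Finset.sum_congr rfl fun i _ => ?_
    rw [integral_smul_measure, integral_dirac, ENNReal.toReal_ofReal (sq_nonneg _),
      real_inner_smul_right, real_inner_comm, smul_eq_mul]
    ring

variable {N : ℕ}

/-- The standard basis vectors `e₀, …, e_N` of Euclidean space, continued by `e n = 0` for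
`n > N`. -/
noncomputable def truncBasis (N n : ℕ) : EuclideanSpace ℝ (Fin (N + 1)) :=
  WithLp.toLp 2 fun i => if (i : ℕ) = n then 1 else 0

lemma truncBasis_val (i : Fin (N + 1)) :
    truncBasis N i = EuclideanSpace.basisFun (Fin (N + 1)) ℝ i := by
  ext j
  simp [truncBasis, Fin.ext_iff]

lemma truncBasis_of_lt {n : ℕ} (hn : N < n) : truncBasis N n = 0 := by
  ext i
  simp [truncBasis, (i.is_le.trans_lt hn).ne]

lemma inner_truncBasis {n : ℕ} (hn : n ≤ N) (j : ℕ) :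
    ⟪truncBasis N n, truncBasis N j⟫_ℝ = if n = j then 1 else 0 := by
  have hsingle := truncBasis_val (⟨n, Nat.lt_succ_of_le hn⟩ : Fin (N + 1))
  dsimp only at hsingle
  rw [hsingle, EuclideanSpace.basisFun_apply, EuclideanSpace.inner_single_left]
  simp [truncBasis]

lemma norm_truncBasis {n : ℕ} (hn : n ≤ N) : ‖truncBasis N n‖ = 1 := by
  rw [norm_eq_sqrt_real_inner (F := EuclideanSpace ℝ (Fin (N + 1))), inner_truncBasis hn,
    if_pos rfl, Real.sqrt_one]

/-- The operator `L` with `L e_n = α n e_n + β (n + 1) e_(n + 1)` on the span of `e₀, …, e_N`. -/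
noncomputable def bidiagonal (α β : ℕ → ℝ) (N : ℕ) :
    EuclideanSpace ℝ (Fin (N + 1)) →ₗ[ℝ] EuclideanSpace ℝ (Fin (N + 1)) :=
  (EuclideanSpace.basisFun (Fin (N + 1)) ℝ).toBasis.constr ℝ fun i =>
    α i • truncBasis N i + β (i + 1) • truncBasis N (i + 1)

/-- The truncated Jacobi operator `L Lᵀ` with the bidiagonal factor `L`. -/
noncomputable def jacobiOperator (α β : ℕ → ℝ) (N : ℕ) :
    EuclideanSpace ℝ (Fin (N + 1)) →ₗ[ℝ] EuclideanSpace ℝ (Fin (N + 1)) :=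
  bidiagonal α β N ∘ₗ (bidiagonal α β N).adjoint

lemma isPositive_jacobiOperator (α β : ℕ → ℝ) : (jacobiOperator α β N).IsPositive :=
  LinearMap.isPositive_self_comp_adjoint _

lemma bidiagonal_truncBasis (α β : ℕ → ℝ) (i : Fin (N + 1)) :
    bidiagonal α β N (truncBasis N i) =
      α i • truncBasis N i + β (i + 1) • truncBasis N (i + 1) := by
  rw [truncBasis_val, ← OrthonormalBasis.coe_toBasis, bidiagonal, Module.Basis.constr_basis,
    OrthonormalBasis.coe_toBasis, truncBasis_val]

lemma adjoint_bidiagonal_truncBasis (α : ℕ → ℝ) {β : ℕ → ℝ} (hβ : β 0 = 0) {n : ℕ} (hn : n ≤ N) :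
    (bidiagonal α β N).adjoint (truncBasis N n) =
      α n • truncBasis N n + β n • truncBasis N (n - 1) := by
  refine InnerProductSpace.ext_inner_left_basis (EuclideanSpace.basisFun _ ℝ).toBasis fun i => ?_
  rw [OrthonormalBasis.coe_toBasis, ← truncBasis_val, LinearMap.adjoint_inner_right,
    bidiagonal_truncBasis, real_inner_comm]
  simp only [inner_add_right, real_inner_smul_right, inner_truncBasis hn, inner_truncBasis i.is_le]
  rcases n with _ | n
  · simp only [hβ]
    grind
  · grind

lemma jacobiOperator_truncBasis (α : ℕ → ℝ) {β : ℕ → ℝ} (hβ : β 0 = 0) {n : ℕ} (hn : n ≤ N) :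
    jacobiOperator α β N (truncBasis N n) = (α n ^ 2 + β n ^ 2) • truncBasis N n +
      (α n * β (n + 1)) • truncBasis N (n + 1) + (α (n - 1) * β n) • truncBasis N (n - 1) := by
  have hpred : n - 1 ≤ N := by omega
  have hL : ∀ {j}, j ≤ N → bidiagonal α β N (truncBasis N j) =
      α j • truncBasis N j + β (j + 1) • truncBasis N (j + 1) := fun {j} hj =>
    bidiagonal_truncBasis α β ⟨j, Nat.lt_succ_of_le hj⟩
  rw [jacobiOperator, LinearMap.comp_apply, adjoint_bidiagonal_truncBasis α hβ hn, map_add,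
    map_smul, map_smul, hL hn, hL hpred]
  rcases n with _ | n
  · simp only [hβ]
    module
  · simp only [Nat.add_sub_cancel]
    module

lemma aeval_jacobiOperator_truncBasis_zero {b g α β : ℕ → ℝ} {P : ℕ → ℝ[X]}
    (hP : IsThreeTerm b g P) (hβ : β 0 = 0)
    (hb : ∀ n, (∀ j < n, α j * β (j + 1) ≠ 0) → b n = α n ^ 2 + β n ^ 2)
    (hg : ∀ n, (∀ j < n, α j * β (j + 1) ≠ 0) → g (n + 1) = (α n * β (n + 1)) ^ 2)
    {n : ℕ} (hn : n ≤ N) :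
    aeval (jacobiOperator α β N) (P n) (truncBasis N 0) =
      (∏ j ∈ Finset.range n, α j * β (j + 1)) • truncBasis N n := by
  set π : ℕ → ℝ := fun n => ∏ j ∈ Finset.range n, α j * β (j + 1)
  have hπ : ∀ n, π (n + 1) = π n * (α n * β (n + 1)) := fun n => Finset.prod_range_succ _ n
  have hbπ : ∀ n, π n * b n = π n * (α n ^ 2 + β n ^ 2) := fun n => by
    by_cases h : π n = 0
    · rw [h, zero_mul, zero_mul]
    · rw [hb n fun j hj => Finset.prod_ne_zero_iff.mp h j (Finset.mem_range.mpr hj)]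
  have hgπ : ∀ n, π n * g (n + 1) = π (n + 1) * (α n * β (n + 1)) := fun n => by
    by_cases h : π n = 0
    · rw [hπ, h, zero_mul, zero_mul, zero_mul]
    · rw [hg n fun j hj => Finset.prod_ne_zero_iff.mp h j (Finset.mem_range.mpr hj), hπ]
      ring
  induction n using Nat.strong_induction_on with
  | _ n ih =>
    rcases n with _ | n
    · simp [hP.zero]
    · rw [hP.succ_eq n]
      simp only [map_sub, map_mul, aeval_X, aeval_C, LinearMap.sub_apply, Module.End.mul_apply,
        Module.algebraMap_end_apply]
      rw [ih n n.lt_succ_self (by omega), ih (n - 1) (by omega) (by omega), map_smul,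
        jacobiOperator_truncBasis α hβ (by omega)]
      rcases n with _ | n
      · have hb0 := hbπ 0
        simp only [hβ, hP.coeff_zero] at hb0 ⊢
        linear_combination (norm := module) (-hb0) • truncBasis N 0 - hπ 0 • truncBasis N 1
      · simp only [Nat.add_sub_cancel]
        linear_combination (norm := module) (-hbπ (n + 1)) • truncBasis N (n + 1) -
          hπ (n + 1) • truncBasis N (n + 2) - hgπ n • truncBasis N n

lemma abs_le_ascFactorial_of_abs_le {r : ℕ → ℕ → ℝ} {D U V : ℕ → ℝ} {K : ℝ}
    (hD : ∀ j, 0 ≤ D j) (hU : ∀ j, 0 ≤ U j) (hV : ∀ j, 0 ≤ V j)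
    (hK : ∀ j : ℕ, D j + U j + V j ≤ K * (j + 1) ^ 2) (h0 : ∀ j, |r 0 j| ≤ 1)
    (hr : ∀ k j, |r (k + 1) j| ≤ D j * |r k j| + U j * |r k (j + 1)| + V j * |r k (j - 1)|)
    (k j : ℕ) : |r k j| ≤ K ^ k * ((j + 1).ascFactorial k : ℝ) ^ 2 := by
  have hK0 : 0 ≤ K := by simpa using (add_nonneg (add_nonneg (hD 0) (hU 0)) (hV 0)).trans (hK 0)
  induction k generalizing j with
  | zero => simpa using h0 j
  | succ k ih =>
    set W := K ^ k * ((j + 1 + 1).ascFactorial k : ℝ) ^ 2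
    have hW : ∀ i ≤ j + 1, |r k i| ≤ W := fun i hi => (ih i).trans <| by
      dsimp only [W]
      gcongr
    calc |r (k + 1) j| ≤ D j * |r k j| + U j * |r k (j + 1)| + V j * |r k (j - 1)| := hr k j
      _ ≤ D j * W + U j * W + V j * W := by
        have := hD j
        have := hU j
        have := hV j
        gcongr <;> exact hW _ (by omega)
      _ = (D j + U j + V j) * W := by ring
      _ ≤ K * (j + 1) ^ 2 * W := by gcongr; exact hK j
      _ = K ^ (k + 1) * ((j + 1).ascFactorial (k + 1) : ℝ) ^ 2 := by
        rw [Nat.ascFactorial_succ, ← Nat.succ_ascFactorial]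
        push_cast
        ring

lemma abs_inner_jacobiOperator_pow_succ_le {α β : ℕ → ℝ} (hβ : β 0 = 0)
    (hα0 : ∀ n, 0 ≤ α n) (hβ0 : ∀ n, 0 ≤ β n) (k j : ℕ) (w : EuclideanSpace ℝ (Fin (N + 1))) :
    |⟪truncBasis N j, (jacobiOperator α β N ^ (k + 1)) w⟫_ℝ| ≤
      (α j ^ 2 + β j ^ 2) * |⟪truncBasis N j, (jacobiOperator α β N ^ k) w⟫_ℝ| +
        α j * β (j + 1) * |⟪truncBasis N (j + 1), (jacobiOperator α β N ^ k) w⟫_ℝ| +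
        α (j - 1) * β j * |⟪truncBasis N (j - 1), (jacobiOperator α β N ^ k) w⟫_ℝ| := by
  have hdiag : 0 ≤ α j ^ 2 + β j ^ 2 := by positivity
  have hupp : 0 ≤ α j * β (j + 1) := mul_nonneg (hα0 _) (hβ0 _)
  have hlow : 0 ≤ α (j - 1) * β j := mul_nonneg (hα0 _) (hβ0 _)
  rcases le_or_gt j N with hj | hj
  · rw [pow_succ', Module.End.mul_apply, ← (isPositive_jacobiOperator α β).isSymmetric,
      jacobiOperator_truncBasis α hβ hj]
    simp only [inner_add_left, real_inner_smul_left]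
    refine (abs_add_three _ _ _).trans_eq ?_
    rw [abs_mul (α j ^ 2 + β j ^ 2), abs_mul (α j * β (j + 1)), abs_mul (α (j - 1) * β j),
      abs_of_nonneg hdiag, abs_of_nonneg hupp, abs_of_nonneg hlow]
  · rw [truncBasis_of_lt hj, inner_zero_left, abs_zero]
    positivity

lemma inner_jacobiOperator_pow_le {α β : ℕ → ℝ} (hβ : β 0 = 0) {κ : ℝ}
    (hα0 : ∀ n, 0 ≤ α n) (hβ0 : ∀ n, 0 ≤ β n)
    (hα : ∀ n : ℕ, α n ≤ κ * (n + 1)) (hβκ : ∀ n : ℕ, β n ≤ κ * (n + 1)) (k : ℕ) :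
    ⟪truncBasis N 0, (jacobiOperator α β N ^ k) (truncBasis N 0)⟫_ℝ ≤
      (5 * κ ^ 2) ^ k * (k.factorial : ℝ) ^ 2 := by
  have hκ : 0 ≤ κ := by simpa using (hα0 0).trans (hα 0)
  have hbound : ∀ j : ℕ, α j ^ 2 + β j ^ 2 + α j * β (j + 1) + α (j - 1) * β j ≤
      5 * κ ^ 2 * (j + 1) ^ 2 := fun j => by
    have hα1 : α (j - 1) ≤ κ * (j + 1) := (hα _).trans (by gcongr; omega)
    have hβ1 : β (j + 1) ≤ κ * (2 * (j + 1)) := (hβκ _).trans (by gcongr; push_cast; linarith)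
    have := hα0 j
    have := hβ0 j
    calc α j ^ 2 + β j ^ 2 + α j * β (j + 1) + α (j - 1) * β j
        ≤ (κ * (j + 1)) ^ 2 + (κ * (j + 1)) ^ 2 + κ * (j + 1) * (κ * (2 * (j + 1))) +
          κ * (j + 1) * (κ * (j + 1)) := by
          gcongr
          exacts [hα j, hβκ j, hβ0 _, hα j, hβκ j]
      _ = 5 * κ ^ 2 * (j + 1) ^ 2 := by ring
  have h0 (j : ℕ) :
      |⟪truncBasis N j, (jacobiOperator α β N ^ 0) (truncBasis N 0)⟫_ℝ| ≤ 1 := by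
    rw [pow_zero, Module.End.one_apply, real_inner_comm, inner_truncBasis N.zero_le]
    split_ifs <;> simp
  have := abs_le_ascFactorial_of_abs_le
    (r := fun k j => ⟪truncBasis N j, (jacobiOperator α β N ^ k) (truncBasis N 0)⟫_ℝ)
    (fun j => by positivity)
    (fun j => mul_nonneg (hα0 _) (hβ0 _)) (fun j => mul_nonneg (hα0 _) (hβ0 _)) hbound h0
    (fun k j => abs_inner_jacobiOperator_pow_succ_le hβ hα0 hβ0 k j (truncBasis N 0)) k 0
  exact (le_abs_self _).trans (by simpa using this)

lemma ofReal_exp_mul_sqrt_le_tsum {ε x : ℝ} (hε : 0 < ε) (hx : 0 ≤ x) :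
    ENNReal.ofReal (Real.exp (ε * √x)) ≤
      ∑' k : ℕ, ENNReal.ofReal (2 * (ε ^ (2 * k) * |x| ^ k / ((2 * k).factorial : ℝ))) := by
  have hsum : HasSum (fun k : ℕ => 2 * (ε ^ (2 * k) * |x| ^ k / ((2 * k).factorial : ℝ)))
      (2 * Real.cosh (ε * √x)) := by
    refine ((Real.hasSum_cosh (ε * √x)).mul_left 2).congr_fun fun k => ?_
    rw [mul_pow, pow_mul (√x), Real.sq_sqrt hx, abs_of_nonneg hx]
  rw [← ENNReal.ofReal_tsum_of_nonneg (fun k => by positivity) hsum.summable, hsum.tsum_eq,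
    Real.cosh_eq]
  exact ENNReal.ofReal_le_ofReal (by linarith [Real.exp_pos (-(ε * √x))])

lemma isHardy_zero_of_integral_pow_le {σ : Measure ℝ} {K : ℝ} (hK : 0 < K)
    (h0 : ∀ᵐ x ∂σ, 0 ≤ x) (hσ : HasFiniteMoments σ)
    (hM : ∀ k : ℕ, ∫ x, x ^ k ∂σ ≤ K ^ k * (k.factorial : ℝ) ^ 2) : IsHardy 0 σ := by
  set ε := √(1 / (2 * K))
  have hε : 0 < ε := Real.sqrt_pos.mpr (by positivity)
  set T : ℕ → ℝ → ℝ := fun k x => 2 * (ε ^ (2 * k) * |x| ^ k / ((2 * k).factorial : ℝ))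
  have hTint : ∀ k, Integrable (T k) σ := fun k =>
    (((hσ k).const_mul _).div_const _).const_mul _
  have hT : ∀ k, ∫ x, T k x ∂σ ≤ 2 * (1 / 2) ^ k := fun k => by
    have habs : ∫ x, |x| ^ k ∂σ = ∫ x, x ^ k ∂σ := integral_congr_ae <| by
      filter_upwards [h0] with x hx
      rw [abs_of_nonneg hx]
    have hfact : (k.factorial : ℝ) ^ 2 ≤ ((2 * k).factorial : ℝ) := by
      have := Nat.le_of_dvd (Nat.factorial_pos _)
        (Nat.factorial_mul_factorial_dvd_factorial_add k k)
      rw [two_mul, sq]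
      exact_mod_cast this
    simp only [T]
    rw [integral_const_mul, integral_div, integral_const_mul, habs]
    gcongr
    rw [div_le_iff₀ (by positivity)]
    calc ε ^ (2 * k) * ∫ x, x ^ k ∂σ ≤ ε ^ (2 * k) * (K ^ k * (k.factorial : ℝ) ^ 2) := by
          gcongr
          exact hM k
      _ = (1 / 2) ^ k * (k.factorial : ℝ) ^ 2 := by
          rw [pow_mul, Real.sq_sqrt (by positivity), ← mul_assoc, ← mul_pow]
          congr 2
          field_simp
      _ ≤ (1 / 2) ^ k * ((2 * k).factorial : ℝ) := by gcongr
  refine ⟨by simpa using h0, ε, hε, by fun_prop, ?_⟩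
  rw [hasFiniteIntegral_iff_ofReal (.of_forall fun x => (Real.exp_pos _).le)]
  calc ∫⁻ x, ENNReal.ofReal (Real.exp (ε * √(x + 0))) ∂σ
      ≤ ∫⁻ x, ∑' k, ENNReal.ofReal (T k x) ∂σ := lintegral_mono_ae <| by
        filter_upwards [h0] with x hx
        simpa only [add_zero] using ofReal_exp_mul_sqrt_le_tsum hε hx
    _ = ∑' k, ∫⁻ x, ENNReal.ofReal (T k x) ∂σ := lintegral_tsum fun k => by fun_prop
    _ ≤ ∑' k : ℕ, ENNReal.ofReal (2 * (1 / 2) ^ k) := ENNReal.tsum_le_tsum fun k => by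
        rw [← ofReal_integral_eq_lintegral_ofReal (hTint k) (.of_forall fun x => by positivity)]
        exact ENNReal.ofReal_le_ofReal (hT k)
    _ = ENNReal.ofReal (∑' k : ℕ, 2 * (1 / 2) ^ k) := (ENNReal.ofReal_tsum_of_nonneg
        (fun k => by positivity) (summable_geometric_two.mul_left 2)).symm
    _ < ⊤ := ENNReal.ofReal_lt_top

variable {b g : ℕ → ℝ} {P : ℕ → ℝ[X]}

lemma exists_measure_integral_eval_eq_zero_of_le (N : ℕ) {α β : ℕ → ℝ} (hP : IsThreeTerm b g P)
    (hβ : β 0 = 0) {κ : ℝ} (hα0 : ∀ n, 0 ≤ α n) (hβ0 : ∀ n, 0 ≤ β n)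
    (hα : ∀ n : ℕ, α n ≤ κ * (n + 1)) (hβκ : ∀ n : ℕ, β n ≤ κ * (n + 1))
    (hb : ∀ n, (∀ j < n, α j * β (j + 1) ≠ 0) → b n = α n ^ 2 + β n ^ 2)
    (hg : ∀ n, (∀ j < n, α j * β (j + 1) ≠ 0) → g (n + 1) = (α n * β (n + 1)) ^ 2) :
    ∃ σ : Measure ℝ, IsProbabilityMeasure σ ∧ (∀ᵐ x ∂σ, 0 ≤ x) ∧ HasFiniteMoments σ ∧
      (∀ k : ℕ, ∫ x, x ^ k ∂σ ≤ (5 * κ ^ 2) ^ k * (k.factorial : ℝ) ^ 2) ∧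
      ∀ n ≤ N, n ≠ 0 → ∫ x, (P n).eval x ∂σ = 0 := by
  obtain ⟨σ, hσ, hσ0, hσmom, hσeval⟩ := exists_measure_integral_eval_eq_inner
    (isPositive_jacobiOperator (N := N) α β) (norm_truncBasis N.zero_le)
  refine ⟨σ, hσ, hσ0, hσmom, fun k => ?_, fun n hn hn0 => ?_⟩
  · have hk := hσeval (X ^ k)
    simp only [eval_pow, eval_X, map_pow, aeval_X] at hk
    exact hk ▸ inner_jacobiOperator_pow_le hβ hα0 hβ0 hα hβκ k
  · rw [hσeval, aeval_jacobiOperator_truncBasis_zero hP hβ hb hg hn, real_inner_smul_right,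
      inner_truncBasis N.zero_le, if_neg hn0.symm, mul_zero]

-- The truncated Jacobi operators have spectral measures with uniformly bounded moments, and the
-- integral of `P n` is already right from the `n`-th truncation on.
theorem exists_isHardy_zero_of_isThreeTerm {l m : ℕ → ℝ} (hP : IsThreeTerm b g P) (hm0 : m 0 = 0)
    (hl : ∀ n, 0 ≤ l n) (hm : ∀ n, 0 ≤ m n) {K : ℝ} (hK : 0 < K)
    (hlK : ∀ n : ℕ, l n ≤ K * (n + 1) ^ 2) (hmK : ∀ n : ℕ, m n ≤ K * (n + 1) ^ 2)
    (hb : ∀ n, (∀ j < n, l j * m (j + 1) ≠ 0) → b n = l n + m n)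
    (hg : ∀ n, (∀ j < n, l j * m (j + 1) ≠ 0) → g (n + 1) = l n * m (n + 1)) :
    ∃ σ : Measure ℝ, IsProbabilityMeasure σ ∧ IsHardy 0 σ ∧
      ∀ n, n ≠ 0 → ∫ x, (P n).eval x ∂σ = 0 := by
  have hsqrt : ∀ {u : ℝ} {n : ℕ}, u ≤ K * (n + 1) ^ 2 → √u ≤ √K * (n + 1) := fun {u n} hu => by
    rw [Real.sqrt_le_left (by positivity), mul_pow, Real.sq_sqrt hK.le]
    exact hu
  have hsq : ∀ i j, (√(l i) * √(m j)) ^ 2 = l i * m j := fun i j => by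
    rw [mul_pow, Real.sq_sqrt (hl i), Real.sq_sqrt (hm j)]
  have hne : ∀ {n}, (∀ j < n, √(l j) * √(m (j + 1)) ≠ 0) → ∀ j < n, l j * m (j + 1) ≠ 0 :=
    fun h j hj => by
      rw [← hsq]
      exact pow_ne_zero 2 (h j hj)
  choose κ hκ hκ0 hκmom hκM hκeval using fun N =>
    exists_measure_integral_eval_eq_zero_of_le N (α := fun n => √(l n)) (β := fun n => √(m n)) hP
      (by simp [hm0]) (fun n => Real.sqrt_nonneg _) (fun n => Real.sqrt_nonneg _)
      (fun n => hsqrt (hlK n)) (fun n => hsqrt (hmK n))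
      (fun n h => by rw [hb n (hne h), Real.sq_sqrt (hl n), Real.sq_sqrt (hm n)])
      (fun n h => by rw [hg n (hne h), hsq])
  obtain ⟨σ, hσ, hσ0, hσmom, hσM, hσlim⟩ := exists_measure_integral_eval_eq
    (κ := fun N => ⟨κ N, hκ N⟩) hκ0 hκmom hκM
  refine ⟨σ, hσ, isHardy_zero_of_integral_pow_le (by positivity) hσ0 hσmom hσM, fun n hn => ?_⟩
  refine hσlim (P n) 0 (tendsto_const_nhds.congr' ?_)
  filter_upwards [eventually_ge_atTop n] with N hN
  exact (hκeval N n hN hn).symm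

lemma IsThreeTerm.comp_X_sub_C {R : Type*} [CommRing R] {b g : ℕ → R} {P : ℕ → R[X]}
    (hP : IsThreeTerm b g P) (c : R) :
    IsThreeTerm (fun n => b n + c) g fun n => (P n).comp (X - C c) where
  coeff_zero := hP.coeff_zero
  zero := by simp [hP.zero]
  X_mul n := by
    have := congrArg (fun p : R[X] => p.comp (X - C c)) (hP.X_mul n)
    simp only [mul_comp, add_comp, X_comp, C_comp] at this
    simp only [C_add]
    linear_combination this

lemma IsHardy.map_sub {σ : Measure ℝ} (h : IsHardy 0 σ) (c : ℝ) :
    IsHardy c (σ.map fun x => x - c) := by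
  have hsub : Measurable fun x : ℝ => x - c := by fun_prop
  obtain ⟨h0, ε, hε, hexp⟩ := h
  refine ⟨(ae_map_iff hsub.aemeasurable measurableSet_Ici).mpr ?_, ε, hε, ?_⟩
  · filter_upwards [h0] with x hx
    linarith
  · rw [integrable_map_measure (by fun_prop) hsub.aemeasurable]
    simpa [Function.comp_def] using hexp

theorem exists_isHardy_of_isThreeTerm {l m : ℕ → ℝ} (hP : IsThreeTerm b g P) (hm0 : m 0 = 0)
    (hl : ∀ n, 0 ≤ l n) (hm : ∀ n, 0 ≤ m n) {K : ℝ} (hK : 0 < K)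
    (hlK : ∀ n : ℕ, l n ≤ K * (n + 1) ^ 2) (hmK : ∀ n : ℕ, m n ≤ K * (n + 1) ^ 2) {c : ℝ}
    (hb : ∀ n, (∀ j < n, l j * m (j + 1) ≠ 0) → b n + c = l n + m n)
    (hg : ∀ n, (∀ j < n, l j * m (j + 1) ≠ 0) → g (n + 1) = l n * m (n + 1)) :
    ∃ σ : Measure ℝ, IsProbabilityMeasure σ ∧ IsHardy c σ ∧
      ∀ n, n ≠ 0 → ∫ x, (P n).eval x ∂σ = 0 := by
  obtain ⟨σ, hσ, hHardy, hzero⟩ :=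
    exists_isHardy_zero_of_isThreeTerm (hP.comp_X_sub_C c) hm0 hl hm hK hlK hmK hb hg
  have hsub : Measurable fun x : ℝ => x - c := by fun_prop
  refine ⟨σ.map fun x => x - c, Measure.isProbabilityMeasure_map hsub.aemeasurable,
    hHardy.map_sub c, fun n hn => ?_⟩
  rw [integral_map hsub.aemeasurable (by fun_prop)]
  simpa using hzero n hn

end Favard

section QNumber

lemma qnum_add (q : ℝ) (k m : ℕ) : qnum q (k + m) = qnum q k + q ^ k * qnum q m := by
  simp only [qnum, Finset.sum_range_add, Finset.mul_sum, pow_add]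

lemma qnum_zero (q : ℝ) : qnum q 0 = 0 := by simp [qnum]

lemma qnum_one (q : ℝ) : qnum q 1 = 1 := by simp [qnum]

lemma qnum_succ (q : ℝ) (k : ℕ) : qnum q (k + 1) = 1 + q * qnum q k := by
  rw [add_comm, qnum_add, qnum_one, pow_one]

lemma pow_eq_one_sub_mul_qnum (q : ℝ) (k : ℕ) : q ^ k = 1 - (1 - q) * qnum q k := by
  rw [qnum, mul_neg_geom_sum]
  ring

/-- The `q`-binomial coefficient. It is defined by the `q`-Pascal rule rather than as a quotient of
`q`-factorials, so that it is meaningful for every `q`, also when `[n]_q!` vanishes. -/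
noncomputable def qChoose (q : ℝ) : ℕ → ℕ → ℝ
  | _, 0 => 1
  | 0, _ + 1 => 0
  | n + 1, k + 1 => qChoose q n k + q ^ (k + 1) * qChoose q n (k + 1)

variable (q : ℝ)

lemma qChoose_zero_right (n : ℕ) : qChoose q n 0 = 1 := by
  cases n <;> rfl

lemma qChoose_succ_succ (n k : ℕ) :
    qChoose q (n + 1) (k + 1) = qChoose q n k + q ^ (k + 1) * qChoose q n (k + 1) := rfl

lemma qChoose_eq_zero_of_lt {n k : ℕ} (h : n < k) : qChoose q n k = 0 := by
  induction n generalizing k with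
  | zero =>
    obtain ⟨k, rfl⟩ := Nat.exists_eq_add_of_lt h
    rfl
  | succ n ih =>
    obtain ⟨k, rfl⟩ := Nat.exists_eq_add_of_lt h
    rw [qChoose_succ_succ, ih (by omega), ih (by omega), mul_zero, add_zero]

lemma qChoose_self (n : ℕ) : qChoose q n n = 1 := by
  induction n with
  | zero => rfl
  | succ n ih =>
    rw [qChoose_succ_succ, ih, qChoose_eq_zero_of_lt q n.lt_succ_self, mul_zero, add_zero]

lemma qChoose_succ_right_mul_qnum (n k : ℕ) :
    qChoose q n (k + 1) * qnum q (k + 1) = qChoose q n k * qnum q (n - k) := by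
  induction n generalizing k with
  | zero => simp [qChoose, qnum_zero]
  | succ n ih =>
    rcases k with _ | k
    · have h0 := ih 0
      simp only [qChoose_succ_succ, qChoose_zero_right, zero_add, qnum_one, Nat.sub_zero,
        qnum_succ q n] at h0 ⊢
      linear_combination q * h0
    · have hswap : qChoose q n (k + 1) * (qnum q (k + 2) + q ^ (k + 2) * qnum q (n - (k + 1))) =
          qChoose q n (k + 1) * (qnum q (k + 1) + q ^ (k + 1) * qnum q (n - k)) := by
        rcases lt_or_ge n (k + 1) with h | h
        · rw [qChoose_eq_zero_of_lt q h, zero_mul, zero_mul]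
        · rw [← qnum_add, ← qnum_add]
          congr 2
          omega
      rw [qChoose_succ_succ, qChoose_succ_succ, Nat.add_sub_add_right]
      linear_combination hswap + q ^ (k + 2) * ih (k + 1) + ih k

lemma qChoose_succ_left_mul_qnum (n k : ℕ) :
    qChoose q (n + 1) k * qnum q (n + 1 - k) = qChoose q n k * qnum q (n + 1) := by
  rcases lt_or_ge n k with h | h
  · rw [Nat.sub_eq_zero_of_le h, qnum_zero, qChoose_eq_zero_of_lt q h, mul_zero, zero_mul]
  · rw [← qChoose_succ_right_mul_qnum, qChoose_succ_succ]
    have hsplit : qnum q (n + 1) = qnum q (k + 1) + q ^ (k + 1) * qnum q (n - k) := by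
      rw [← qnum_add]
      congr 1
      omega
    rw [hsplit]
    linear_combination q ^ (k + 1) * qChoose_succ_right_mul_qnum q n k

end QNumber

section Christoffel

variable (η θ τ q s t x : ℝ)

/-- The diagonal Jacobi coefficients of `christoffelPoly η θ τ q s k`. -/
noncomputable def christoffelDiag (k n : ℕ) : ℝ :=
  θ * qnum q n + η * τ * qnum q n * (qnum q (k + n) + qnum q k) + q ^ k * cCoef η τ q s n
    + s * η * qnum q k

/-- The off-diagonal Jacobi coefficients of `christoffelPoly η θ τ q s k`. -/
noncomputable def christoffelOffDiag (k n : ℕ) : ℝ :=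
  aCoef η θ τ q (k + n - 1) * cCoef η τ q s n

/-- The `k`-th iterated Christoffel transform of the polynomials `p̄_n(·;s)`: if these are
orthogonal for `μ`, then `christoffelPoly η θ τ q s k` is orthogonal for `A_0 ⋯ A_(k-1) μ`. -/
noncomputable def christoffelPoly (k : ℕ) : ℕ → ℝ[X] :=
  threeTerm (christoffelDiag η θ τ q s k) (christoffelOffDiag η θ τ q s k)

/-- `A_k(·, s)` as a polynomial. -/
noncomputable def APoly (k : ℕ) : ℝ[X] :=
  C (aCoef η θ τ q k - s * η * q ^ k * qnum q k) + C (q ^ k) * X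

lemma eval_APoly (k : ℕ) : (APoly η θ τ q s k).eval x = ACoef η θ τ q x s k := by
  simp only [APoly, ACoef, eval_add, eval_mul, eval_C, eval_X]
  ring

lemma cCoef_zero : cCoef η τ q s 0 = 0 := by simp [cCoef, qnum_zero]

lemma isThreeTerm_christoffelPoly (k : ℕ) :
    IsThreeTerm (christoffelDiag η θ τ q s k) (christoffelOffDiag η θ τ q s k)
      (christoffelPoly η θ τ q s k) :=
  isThreeTerm_threeTerm (by rw [christoffelOffDiag, cCoef_zero, mul_zero])

lemma christoffelDiag_succ_add (k n : ℕ) :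
    christoffelDiag η θ τ q s (k + 1) n + q ^ k * cCoef η τ q s n =
      q ^ k * cCoef η τ q s (n + 1) + christoffelDiag η θ τ q s k n := by
  rcases n with _ | n <;>
  · simp only [christoffelDiag, cCoef, Nat.add_sub_cancel, Nat.sub_self, qnum_add q k,
      qnum_add q (k + 1), pow_succ q k, pow_eq_one_sub_mul_qnum q k, qnum_succ, qnum_zero, zero_add]
    ring

lemma christoffelOffDiag_succ_add (k n : ℕ) :
    christoffelOffDiag η θ τ q s (k + 1) (n + 1) +
        q ^ k * cCoef η τ q s (n + 1) * christoffelDiag η θ τ q s (k + 1) n =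
      christoffelDiag η θ τ q s k (n + 1) * (q ^ k * cCoef η τ q s (n + 1)) +
        christoffelOffDiag η θ τ q s k (n + 1) := by
  have hpred : k + (n + 1) - 1 = k + n := rfl
  have hpred' : k + 1 + (n + 1) - 1 = k + 1 + n := rfl
  rcases n with _ | n <;>
  · simp only [christoffelDiag, christoffelOffDiag, aCoef, cCoef, hpred, hpred',
      Nat.add_sub_cancel, Nat.sub_self, qnum_add q k, qnum_add q (k + 1), pow_succ q k,
      pow_eq_one_sub_mul_qnum q k, qnum_succ, qnum_zero, zero_add]
    ring

lemma christoffelPoly_eq_add (k n : ℕ) :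
    christoffelPoly η θ τ q s k n = christoffelPoly η θ τ q s (k + 1) n +
      C (q ^ k * cCoef η τ q s n) * christoffelPoly η θ τ q s (k + 1) (n - 1) := by
  have hT := isThreeTerm_christoffelPoly η θ τ q s (k + 1)
  refine (isThreeTerm_christoffelPoly η θ τ q s k).eq_of_le (M := n)
    (S := fun n => christoffelPoly η θ τ q s (k + 1) n +
      C (q ^ k * cCoef η τ q s n) * christoffelPoly η θ τ q s (k + 1) (n - 1))
    (by simp [hT.zero, cCoef_zero]) (fun n _ => ?_) le_rfl
  have hdiag := congrArg (C : ℝ → ℝ[X]) (christoffelDiag_succ_add η θ τ q s k n)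
  have hrec := hT.X_mul n
  rcases n with _ | n
  · simp only [C_add, C_mul, cCoef_zero, christoffelOffDiag, mul_zero, C_0, zero_mul, add_zero,
      zero_add, Nat.add_sub_cancel] at hdiag hrec ⊢
    linear_combination hrec + christoffelPoly η θ τ q s (k + 1) 0 * hdiag
  · have hoff := congrArg (C : ℝ → ℝ[X]) (christoffelOffDiag_succ_add η θ τ q s k n)
    have hshift := congrArg (C : ℝ → ℝ[X]) (show
      q ^ k * cCoef η τ q s (n + 1) * christoffelOffDiag η θ τ q s (k + 1) n =
        christoffelOffDiag η θ τ q s k (n + 1) * (q ^ k * cCoef η τ q s n) by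
      simp only [christoffelOffDiag, show k + 1 + n = k + (n + 1) by omega]
      ring)
    simp only [C_add, C_mul, Nat.add_sub_cancel] at hdiag hoff hshift hrec ⊢
    linear_combination hrec + C (q ^ k) * C (cCoef η τ q s (n + 1)) * hT.X_mul n
      + christoffelPoly η θ τ q s (k + 1) (n + 1) * hdiag
      + christoffelPoly η θ τ q s (k + 1) n * hoff
      + christoffelPoly η θ τ q s (k + 1) (n - 1) * hshift

lemma APoly_mul_christoffelPoly (k n : ℕ) :
    APoly η θ τ q s k * christoffelPoly η θ τ q s (k + 1) n =
      C (q ^ k) * christoffelPoly η θ τ q s k (n + 1) +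
        C (aCoef η θ τ q (k + n)) * christoffelPoly η θ τ q s k n := by
  have hdiag : q ^ k * christoffelDiag η θ τ q s (k + 1) n +
      (aCoef η θ τ q k - s * η * q ^ k * qnum q k) =
        q ^ k * (q ^ k * cCoef η τ q s (n + 1)) + aCoef η θ τ q (k + n) := by
    rcases n with _ | n <;>
    · simp only [christoffelDiag, aCoef, cCoef, Nat.add_sub_cancel, Nat.sub_self, qnum_add q k,
        qnum_add q (k + 1), pow_succ q k, pow_eq_one_sub_mul_qnum q k, qnum_succ, qnum_zero,
        zero_add]
      ring
  have hT := (isThreeTerm_christoffelPoly η θ τ q s (k + 1)).X_mul n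
  have hoff : christoffelOffDiag η θ τ q s (k + 1) n = aCoef η θ τ q (k + n) * cCoef η τ q s n := by
    rw [christoffelOffDiag, show k + 1 + n - 1 = k + n by omega]
  have hdiag' := congrArg (C : ℝ → ℝ[X]) hdiag
  rw [hoff] at hT
  rw [APoly, christoffelPoly_eq_add _ _ _ _ _ k n, christoffelPoly_eq_add _ _ _ _ _ k (n + 1),
    Nat.add_sub_cancel]
  simp only [C_add, C_sub, C_mul] at hT hdiag' ⊢
  linear_combination C (q ^ k) * hT + christoffelPoly η θ τ q s (k + 1) n * hdiag'

end Christoffel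

section Connection

variable (η θ τ q s t x : ℝ)

/-- The death rates of the birth-and-death process with birth rates `A_k(x, s)` whose Jacobi matrix
is that of the transition polynomials. -/
noncomputable def deathRate (k : ℕ) : ℝ :=
  η * (t - s * q ^ (k - 1) + τ * qnum q (k - 1)) * qnum q k

lemma deathRate_zero : deathRate η τ q s t 0 = 0 := by rw [deathRate, qnum_zero, mul_zero]

/-- The transition polynomials, which are orthogonal for the transition probability `ν_x` from time
`s` to time `t`. -/
noncomputable def transitionPoly : ℕ → ℝ[X] :=
  threeTerm (fun k => ACoef η θ τ q x s k + deathRate η τ q s t k - η⁻¹)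
    fun k => ACoef η θ τ q x s (k - 1) * deathRate η τ q s t k

lemma isThreeTerm_transitionPoly :
    IsThreeTerm (fun k => ACoef η θ τ q x s k + deathRate η τ q s t k - η⁻¹)
      (fun k => ACoef η θ τ q x s (k - 1) * deathRate η τ q s t k)
      (transitionPoly η θ τ q s t x) :=
  isThreeTerm_threeTerm (by rw [deathRate_zero, mul_zero])

/-- The coefficients of `p̄_n(·;t)` in the basis of transition polynomials. -/
noncomputable def connectionCoef (n k : ℕ) : ℝ :=
  qChoose q n k * (christoffelPoly η θ τ q s k (n - k)).eval x

lemma qnum_mul_ACoef_mul_eval_christoffelPoly (k n : ℕ) :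
    qnum q n * (ACoef η θ τ q x s k * (christoffelPoly η θ τ q s (k + 1) (n - 1)).eval x) =
      qnum q n * (q ^ k * (christoffelPoly η θ τ q s k n).eval x +
        aCoef η θ τ q (k + n - 1) * (christoffelPoly η θ τ q s k (n - 1)).eval x) := by
  rcases n with _ | n
  · rw [qnum_zero, zero_mul, zero_mul]
  · have h := congrArg (eval x) (APoly_mul_christoffelPoly η θ τ q s k n)
    simp only [eval_mul, eval_add, eval_C, eval_APoly] at h
    rw [Nat.add_sub_cancel, h]
    rfl

lemma connectionCoef_row_diag (k n : ℕ) :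
    q ^ k * (x - christoffelDiag η θ τ q s k n) + bCoef η θ τ q t (k + n) =
      qnum q k * q ^ (k - 1) * (η * (s + τ * qnum q n)) +
        (ACoef η θ τ q x s k + deathRate η τ q s t k - η⁻¹) +
        η * (t - s * q ^ k + τ * qnum q k) * qnum q n * q ^ k := by
  rcases k with _ | k
  · rcases n with _ | n <;>
    · simp only [christoffelDiag, bCoef, aCoef, ACoef, cCoef, deathRate, Nat.add_sub_cancel,
        qnum_succ, qnum_zero, zero_add]
      ring
  · rcases n with _ | n <;>
    · simp only [christoffelDiag, bCoef, aCoef, ACoef, cCoef, deathRate, Nat.add_sub_cancel,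
        Nat.zero_sub, ← add_assoc (k + 1), qnum_add q (k + 1), qnum_succ, qnum_zero, pow_succ q k,
        pow_eq_one_sub_mul_qnum q k, add_zero]
      ring

lemma connectionCoef_row_lower (k n : ℕ) :
    η * (t + τ * qnum q (k + n - 1)) * qnum q n =
      q ^ k * cCoef η τ q s n + η * (t - s * q ^ k + τ * qnum q k) * qnum q n := by
  rcases n with _ | n
  · simp [cCoef_zero, qnum_zero]
  · rw [← add_assoc, Nat.add_sub_cancel, qnum_add, cCoef, Nat.add_sub_cancel]
    ring

lemma eval_christoffelPoly_row (k n : ℕ) :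
    q ^ k * (christoffelPoly η θ τ q s k (n + 1)).eval x +
        bCoef η θ τ q t (k + n) * (christoffelPoly η θ τ q s k n).eval x +
        aCoef η θ τ q (k + n - 1) * (η * (t + τ * qnum q (k + n - 1)) * qnum q n) *
          (christoffelPoly η θ τ q s k (n - 1)).eval x =
      (qnum q k * q ^ (k - 1) * (η * (s + τ * qnum q n)) +
          (ACoef η θ τ q x s k + deathRate η τ q s t k - η⁻¹)) *
          (christoffelPoly η θ τ q s k n).eval x +
        ACoef η θ τ q x s k * (η * (t - s * q ^ k + τ * qnum q k)) * qnum q n *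
          (christoffelPoly η θ τ q s (k + 1) (n - 1)).eval x := by
  have hrec := congrArg (eval x) ((isThreeTerm_christoffelPoly η θ τ q s k).X_mul n)
  simp only [eval_mul, eval_add, eval_X, eval_C, christoffelOffDiag] at hrec
  linear_combination (-q ^ k) * hrec +
    (christoffelPoly η θ τ q s k n).eval x * connectionCoef_row_diag η θ τ q s t x k n +
    aCoef η θ τ q (k + n - 1) * (christoffelPoly η θ τ q s k (n - 1)).eval x *
      connectionCoef_row_lower η τ q s t k n -
    η * (t - s * q ^ k + τ * qnum q k) *
      qnum_mul_ACoef_mul_eval_christoffelPoly η θ τ q s x k n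

lemma connectionCoef_row {n k : ℕ} (h : k ≤ n) :
    qChoose q n k * q ^ k * (christoffelPoly η θ τ q s k (n - k + 1)).eval x +
        bCoef η θ τ q t n * connectionCoef η θ τ q s x n k +
        aCoef η θ τ q (n - 1) * cCoef η τ q t n * connectionCoef η θ τ q s x (n - 1) k =
      qChoose q n k * (qnum q k * q ^ (k - 1) * (η * (s + τ * qnum q (n - k)))) *
          (christoffelPoly η θ τ q s k (n - k)).eval x +
        (ACoef η θ τ q x s k + deathRate η τ q s t k - η⁻¹) * connectionCoef η θ τ q s x n k +
        ACoef η θ τ q x s k * deathRate η τ q s t (k + 1) *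
          connectionCoef η θ τ q s x n (k + 1) := by
  have hlower : qChoose q (n - 1) k * qnum q n = qChoose q n k * qnum q (n - k) := by
    rcases n with _ | n
    · simp [qnum_zero]
    · rw [qChoose_succ_left_mul_qnum, Nat.add_sub_cancel]
  have hrow := eval_christoffelPoly_row η θ τ q s t x k (n - k)
  rw [Nat.add_sub_cancel' h] at hrow
  simp only [connectionCoef, deathRate, cCoef, Nat.add_sub_cancel, ← Nat.sub_sub,
    Nat.sub_right_comm n 1 k] at hrow ⊢
  linear_combination qChoose q n k * hrow +
    aCoef η θ τ q (n - 1) * (η * (t + τ * qnum q (n - 1))) *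
      (christoffelPoly η θ τ q s k (n - k - 1)).eval x * hlower -
    ACoef η θ τ q x s k * (η * (t - s * q ^ k + τ * qnum q k)) *
      (christoffelPoly η θ τ q s (k + 1) (n - k - 1)).eval x *
      qChoose_succ_right_mul_qnum q n k

lemma connectionCoef_of_lt {n k : ℕ} (h : n < k) : connectionCoef η θ τ q s x n k = 0 := by
  rw [connectionCoef, qChoose_eq_zero_of_lt q h, zero_mul]

lemma connectionCoef_self (n : ℕ) : connectionCoef η θ τ q s x n n = 1 := by
  rw [connectionCoef, qChoose_self, Nat.sub_self, (isThreeTerm_christoffelPoly η θ τ q s n).zero,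
    eval_one, one_mul]

lemma connectionCoef_zero_right (n : ℕ) :
    connectionCoef η θ τ q s x n 0 = (christoffelPoly η θ τ q s 0 n).eval x := by
  rw [connectionCoef, qChoose_zero_right, one_mul, Nat.sub_zero]

lemma connectionCoef_succ_succ {n k : ℕ} (h : k < n) :
    connectionCoef η θ τ q s x (n + 1) (k + 1) = connectionCoef η θ τ q s x n k +
      qChoose q n (k + 1) * q ^ (k + 1) *
        (christoffelPoly η θ τ q s (k + 1) (n - (k + 1) + 1)).eval x -
      qChoose q n (k + 1) * (qnum q (k + 1) * q ^ k * (η * (s + τ * qnum q (n - (k + 1))))) *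
        (christoffelPoly η θ τ q s (k + 1) (n - (k + 1))).eval x := by
  have hsub : n - k = n - (k + 1) + 1 := by omega
  have hrel := congrArg (eval x) (christoffelPoly_eq_add η θ τ q s k (n - k))
  have habs := qChoose_succ_right_mul_qnum q n k
  rw [hsub] at hrel habs
  simp only [eval_add, eval_mul, eval_C, cCoef, Nat.add_sub_cancel] at hrel
  rw [connectionCoef, connectionCoef, qChoose_succ_succ, Nat.add_sub_add_right, hsub]
  linear_combination (-qChoose q n k) * hrel + q ^ k * (η * (s + τ * qnum q (n - (k + 1)))) *
    (christoffelPoly η θ τ q s (k + 1) (n - (k + 1))).eval x * habs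

lemma connectionCoef_succ_add (n k : ℕ) :
    connectionCoef η θ τ q s x (n + 1) k + bCoef η θ τ q t n * connectionCoef η θ τ q s x n k +
        aCoef η θ τ q (n - 1) * cCoef η τ q t n * connectionCoef η θ τ q s x (n - 1) k =
      jacobiRow (fun k => ACoef η θ τ q x s k + deathRate η τ q s t k - η⁻¹)
        (fun k => ACoef η θ τ q x s (k - 1) * deathRate η τ q s t k)
        (connectionCoef η θ τ q s x n) k := by
  rcases k with _ | k
  · have hrow := connectionCoef_row η θ τ q s t x n.zero_le
    simp only [qChoose_zero_right, qnum_zero, pow_zero, Nat.sub_zero, zero_add] at hrow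
    simp only [jacobiRow, connectionCoef_zero_right η θ τ q s x (n + 1), Nat.sub_self]
    linear_combination hrow
  · rcases lt_or_ge k n with h | h
    · have hrow := connectionCoef_row η θ τ q s t x (k := k + 1) h
      simp only [jacobiRow, Nat.add_sub_cancel, show k + 2 - 1 = k + 1 from rfl] at hrow ⊢
      linear_combination hrow + connectionCoef_succ_succ η θ τ q s x h
    · have hzero : ∀ {i j}, i ≤ n → k < j → connectionCoef η θ τ q s x i j = 0 := fun hi hj =>
        connectionCoef_of_lt η θ τ q s x (by omega)
      simp only [jacobiRow]
      rw [hzero le_rfl k.lt_succ_self, hzero (n.sub_le 1) k.lt_succ_self,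
        hzero le_rfl (by omega : k < k + 2)]
      rcases h.eq_or_lt with rfl | h
      · simp only [connectionCoef_self, mul_zero, add_zero]
      · simp [connectionCoef_of_lt η θ τ q s x h,
          connectionCoef_of_lt η θ τ q s x (Nat.succ_lt_succ h)]

theorem eq_sum_connectionCoef_mul_transitionPoly {P : ℕ → ℝ[X]}
    (hP : IsThreeTerm (bCoef η θ τ q t) (fun n => aCoef η θ τ q (n - 1) * cCoef η τ q t n) P)
    (n : ℕ) :
    P n = ∑ k ∈ Finset.range (n + 1),
      C (connectionCoef η θ τ q s x n k) * transitionPoly η θ τ q s t x k :=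
  hP.eq_sum_of_jacobiRow (isThreeTerm_transitionPoly η θ τ q s t x)
    (connectionCoef_self η θ τ q s x 0) (fun _ _ => connectionCoef_of_lt η θ τ q s x)
    (connectionCoef_succ_add η θ τ q s t x) n

end Connection

section Orthogonality

variable {R : Type*} [CommRing R] [LinearOrder R]

/-- The polynomials `P n` are pairwise orthogonal for the moment functional `Λ`, with nonnegative
squared norms. A squared norm may vanish, as it does for a functional with finite support. -/
structure IsOrthogonal (Λ : R[X] →ₗ[R] R) (P : ℕ → R[X]) : Prop where
  map_mul_eq_zero {n j : ℕ} (h : j < n) : Λ (P n * P j) = 0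
  map_mul_self_nonneg (n : ℕ) : 0 ≤ Λ (P n * P n)

namespace IsOrthogonal

variable {Λ : R[X] →ₗ[R] R} {P P' : ℕ → R[X]}

theorem map_sq_nonneg [IsOrderedRing R] (hP : IsOrthogonal Λ P)
    (hspan : Submodule.span R (Set.range P) = ⊤) (p : R[X]) : 0 ≤ Λ (p ^ 2) := by
  obtain ⟨e, rfl⟩ := (Finsupp.mem_span_range_iff_exists_finsupp (v := P)).mp
    (hspan ▸ Submodule.mem_top : p ∈ Submodule.span R (Set.range P))
  rw [Finsupp.sum, sq, Finset.sum_mul_sum, map_sum]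
  refine Finset.sum_nonneg fun i hi => ?_
  rw [map_sum, Finset.sum_eq_single_of_mem i hi fun j _ hj => ?_]
  · rw [smul_mul_smul_comm, map_smul, smul_eq_mul]
    exact mul_nonneg (mul_self_nonneg _) (hP.map_mul_self_nonneg i)
  · rw [smul_mul_smul_comm, map_smul]
    rcases lt_or_gt_of_ne hj with h | h
    · rw [hP.map_mul_eq_zero h, smul_zero]
    · rw [mul_comm (P i), hP.map_mul_eq_zero h, smul_zero]

variable {c α : ℕ → R} {A : R[X]} {β : R}

lemma map_mul_eq_zero_of_eq_add (hP : IsOrthogonal Λ P) (hc : c 0 = 0)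
    (hPP' : ∀ n, P n = P' n + C (c n) * P' (n - 1)) {n j : ℕ} (h : j < n) :
    Λ (P n * P' j) = 0 := by
  induction j with
  | zero => rw [← hP.map_mul_eq_zero h, hPP' 0, hc, C_0, zero_mul, add_zero]
  | succ j ih =>
    have hz := hP.map_mul_eq_zero h
    rwa [hPP' (j + 1), mul_add, mul_left_comm, C_mul', map_add, map_smul, add_tsub_cancel_right,
      ih (by lia), smul_zero, add_zero] at hz

lemma map_mul_self_of_eq_add (hP : IsOrthogonal Λ P) (hc : c 0 = 0)
    (hPP' : ∀ n, P n = P' n + C (c n) * P' (n - 1)) (n : ℕ) :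
    Λ (P n * P' n) = Λ (P n * P n) := by
  have hsplit : Λ (P n * P n) = Λ (P n * P' n) + c n • Λ (P n * P' (n - 1)) := by
    conv_lhs => enter [2, 2]; rw [hPP' n]
    rw [mul_add, mul_left_comm, C_mul', map_add, map_smul]
  rcases n with _ | n
  · rw [hsplit, hc, zero_smul, add_zero]
  · rw [hsplit, Nat.add_sub_cancel, map_mul_eq_zero_of_eq_add hP hc hPP' n.lt_succ_self, smul_zero,
      add_zero]

theorem christoffel [IsOrderedRing R] (hP : IsOrthogonal Λ P) (hc : c 0 = 0)
    (hPP' : ∀ n, P n = P' n + C (c n) * P' (n - 1))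
    (hA : ∀ n, A * P' n = C β * P (n + 1) + C (α n) * P n) (hα : ∀ n, 0 ≤ α n) :
    IsOrthogonal (Λ ∘ₗ LinearMap.mulLeft R A) P' := by
  have hmul (n j : ℕ) : (Λ ∘ₗ LinearMap.mulLeft R A) (P' n * P' j) =
      β * Λ (P (n + 1) * P' j) + α n * Λ (P n * P' j) := by
    rw [LinearMap.comp_apply, LinearMap.mulLeft_apply, ← mul_assoc, hA, add_mul, mul_assoc,
      mul_assoc, C_mul', C_mul', map_add, map_smul, map_smul, smul_eq_mul, smul_eq_mul]
  have hzero {n j : ℕ} (h : j < n) : Λ (P n * P' j) = 0 :=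
    hP.map_mul_eq_zero_of_eq_add hc hPP' h
  refine ⟨fun {n j} h => ?_, fun n => ?_⟩
  · rw [hmul, hzero (by lia), hzero h, mul_zero, mul_zero, add_zero]
  · rw [hmul, hzero n.lt_succ_self, hP.map_mul_self_of_eq_add hc hPP', mul_zero, zero_add]
    exact mul_nonneg (hα n) (hP.map_mul_self_nonneg n)

end IsOrthogonal

theorem isOrthogonal_christoffelPoly {η θ τ q s : ℝ} {Λ : ℝ[X] →ₗ[ℝ] ℝ}
    (hΛ : IsOrthogonal Λ (christoffelPoly η θ τ q s 0)) (ha : ∀ n, 0 ≤ aCoef η θ τ q n) (m : ℕ) :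
    IsOrthogonal (Λ ∘ₗ LinearMap.mulLeft ℝ (∏ k ∈ Finset.range m, APoly η θ τ q s k))
      (christoffelPoly η θ τ q s m) := by
  induction m with
  | zero => rwa [Finset.prod_range_zero, LinearMap.mulLeft_one, LinearMap.comp_id]
  | succ m ih =>
    rw [Finset.prod_range_succ, LinearMap.mulLeft_mul, ← LinearMap.comp_assoc]
    exact ih.christoffel (by rw [cCoef_zero, mul_zero]) (christoffelPoly_eq_add η θ τ q s m)
      (APoly_mul_christoffelPoly η θ τ q s m) fun n => ha (m + n)

theorem map_prod_APoly_mul_sq_nonneg {η θ τ q s : ℝ} {Λ : ℝ[X] →ₗ[ℝ] ℝ}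
    (hΛ : IsOrthogonal Λ (christoffelPoly η θ τ q s 0)) (ha : ∀ n, 0 ≤ aCoef η θ τ q n) (m : ℕ)
    (p : ℝ[X]) : 0 ≤ Λ ((∏ k ∈ Finset.range m, APoly η θ τ q s k) * p ^ 2) :=
  (isOrthogonal_christoffelPoly hΛ ha m).map_sq_nonneg
    (isThreeTerm_christoffelPoly η θ τ q s m).span_range_eq_top p

end Orthogonality

section Support

lemma mul_sq_le_half_mul_sq_add {G g : ℝ} (h : 0 ≤ G → g = 0) (p : ℝ) :
    G * p ^ 2 ≤ 1 / 2 * (G * g ^ 2) + (1 + G ^ 2) * (g - p) ^ 2 := by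
  rcases le_or_gt 0 G with hG | hG
  · rw [h hG]
    nlinarith [mul_nonneg (by nlinarith [sq_nonneg (G - 1)] : 0 ≤ 1 - G + G ^ 2) (sq_nonneg p)]
  · have hsq : 0 ≤ p ^ 2 + (g - p) ^ 2 - 1 / 2 * g ^ 2 := by nlinarith [sq_nonneg (g - 2 * p)]
    have hG1 : 0 ≤ 1 + G + G ^ 2 := by nlinarith [sq_nonneg (G + 1)]
    nlinarith [mul_nonneg (neg_nonneg.mpr hG.le) hsq, mul_nonneg hG1 (sq_nonneg (g - p))]

lemma HasFiniteMoments.integrable_eval_mul {μ : Measure ℝ} (h : HasFiniteMoments μ) (p : ℝ[X])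
    (f : BoundedContinuousFunction ℝ ℝ) : Integrable (fun x => p.eval x * f x) μ :=
  (h.integrable_eval p).mul_bdd f.continuous.aestronglyMeasurable (.of_forall f.norm_coe_le_norm)

namespace IsHardy

variable {c : ℝ} {μ : Measure ℝ} [IsFiniteMeasure μ] {G : ℝ[X]}

lemma integral_mul_sq_nonneg (h : IsHardy c μ) (hG : ∀ p : ℝ[X], 0 ≤ ∫ x, (G * p ^ 2).eval x ∂μ)
    (g : BoundedContinuousFunction ℝ ℝ) (hg : ∀ x, 0 ≤ G.eval x → g x = 0) :
    0 ≤ ∫ x, G.eval x * g x ^ 2 ∂μ := by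
  have hint := h.hasFiniteMoments.integrable_eval_mul
  have hGg : Integrable (fun x => G.eval x * g x ^ 2) μ := hint G (g ^ 2)
  by_contra! hneg
  obtain ⟨p, hp⟩ := h.exists_integral_eval_mul_sq_sub_eval_lt g (w := 1 + G ^ 2)
    (fun x => by simpa using by positivity)
    (δ := -(1 / 2 * ∫ x, G.eval x * g x ^ 2 ∂μ)) (by linarith)
  have herr : Integrable (fun x => (1 + G ^ 2).eval x * (g x - p.eval x) ^ 2) μ := by
    refine (((hint (1 + G ^ 2) (g ^ 2)).sub (hint (2 * (1 + G ^ 2) * p) g)).add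
      (h.hasFiniteMoments.integrable_eval ((1 + G ^ 2) * p ^ 2))).congr (.of_forall fun x => ?_)
    simp only [Pi.add_apply, Pi.sub_apply, eval_mul, eval_pow, eval_ofNat,
      BoundedContinuousFunction.coe_pow, Pi.pow_apply]
    ring
  have hle : ∫ x, (G * p ^ 2).eval x ∂μ ≤ ∫ x, (1 / 2 * (G.eval x * g x ^ 2) +
      (1 + G ^ 2).eval x * (g x - p.eval x) ^ 2) ∂μ := by
    refine integral_mono (h.hasFiniteMoments.integrable_eval _) ((hGg.const_mul _).add herr)
      fun x => ?_
    simpa using mul_sq_le_half_mul_sq_add (hg x) (p.eval x)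
  rw [integral_add (hGg.const_mul _) herr, integral_const_mul] at hle
  linarith [hG p]

theorem eval_nonneg_of_mem_support (h : IsHardy c μ)
    (hG : ∀ p : ℝ[X], 0 ≤ ∫ x, (G * p ^ 2).eval x ∂μ) {x : ℝ} (hx : x ∈ μ.support) :
    0 ≤ G.eval x := by
  let g : BoundedContinuousFunction ℝ ℝ :=
    .ofNormedAddCommGroup (fun x => min (max (-G.eval x) 0) 1) (by fun_prop) 1 fun x => by
      rw [Real.norm_of_nonneg (by positivity)]
      exact min_le_right _ _
  have hg0 (x : ℝ) (hGx : 0 ≤ G.eval x) : g x = 0 := by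
    change min (max (-G.eval x) 0) 1 = 0
    rw [max_eq_right (by linarith), min_eq_left zero_le_one]
  have hgpos (x : ℝ) (hGx : G.eval x < 0) : 0 < g x :=
    lt_min (lt_max_of_lt_left (neg_pos.mpr hGx)) one_pos
  have hnonpos (x : ℝ) : G.eval x * g x ^ 2 ≤ 0 := by
    rcases le_or_gt 0 (G.eval x) with hGx | hGx
    · rw [hg0 x hGx]
      simp
    · exact mul_nonpos_of_nonpos_of_nonneg hGx.le (sq_nonneg _)
  have hae : ∀ᵐ x ∂μ, 0 ≤ G.eval x := by
    have hint : Integrable (fun x => G.eval x * g x ^ 2) μ :=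
      h.hasFiniteMoments.integrable_eval_mul G (g ^ 2)
    have hzero : ∫ x, -(G.eval x * g x ^ 2) ∂μ = 0 := by
      rw [integral_neg, neg_eq_zero]
      exact (integral_nonpos hnonpos).antisymm (h.integral_mul_sq_nonneg hG g hg0)
    filter_upwards [(integral_eq_zero_iff_of_nonneg (fun x => neg_nonneg.mpr (hnonpos x))
      hint.neg).mp hzero] with x hx
    by_contra! hneg
    exact (mul_neg_of_neg_of_pos hneg (pow_pos (hgpos x hneg) 2)).ne (neg_eq_zero.mp hx)
  exact Measure.support_subset_of_isClosed (isClosed_le continuous_const G.continuous) hae hx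

end IsHardy

end Support

section Growth

variable {η θ τ q s t x : ℝ}

lemma qnum_nonneg (hq : |q| ≤ 1) (n : ℕ) : 0 ≤ qnum q n := by
  rcases (le_of_abs_le hq).eq_or_lt with rfl | hlt
  · exact Finset.sum_nonneg fun i _ => by rw [one_pow]; exact zero_le_one
  · have hpow : q ^ n ≤ 1 := (le_abs_self _).trans (abs_pow q n ▸ pow_le_one₀ (abs_nonneg q) hq)
    rw [pow_eq_one_sub_mul_qnum q n] at hpow
    exact nonneg_of_mul_nonneg_right (by linarith) (sub_pos.mpr hlt)

lemma qnum_le (hq : |q| ≤ 1) (n : ℕ) : qnum q n ≤ n := by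
  have hsum : qnum q n ≤ ∑ _i ∈ Finset.range n, (1 : ℝ) := Finset.sum_le_sum fun i _ =>
    (le_abs_self _).trans (abs_pow q i ▸ pow_le_one₀ (abs_nonneg q) hq)
  simpa using hsum

lemma abs_pow_mul_le (hq : |q| ≤ 1) (n : ℕ) (y : ℝ) : |q ^ n * y| ≤ |y| := by
  rw [abs_mul, abs_pow]
  exact mul_le_of_le_one_left (abs_nonneg y) (pow_le_one₀ (abs_nonneg q) hq)

lemma aCoef_nonneg (hq : |q| ≤ 1) (hη : 0 < η) (hθ : 0 ≤ θ) (hτ : 0 ≤ τ) (n : ℕ) :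
    0 ≤ aCoef η θ τ q n := by
  have := qnum_nonneg hq n
  rw [aCoef]
  positivity

lemma ACoef_le (hq : |q| ≤ 1) (hη : 0 < η) (hτ : 0 ≤ τ) (hs : 0 ≤ s) (n : ℕ) :
    ACoef η θ τ q x s n ≤ (η⁻¹ + |θ| + η * (s + τ) + |x|) * (n + 1) ^ 2 := by
  have h0 := qnum_nonneg hq n
  have h1 : qnum q n ≤ n + 1 := (qnum_le hq n).trans (by linarith)
  have hn : (1 : ℝ) ≤ n + 1 := by linarith [n.cast_nonneg (α := ℝ)]
  have hn2 : (1 : ℝ) ≤ (n + 1) ^ 2 := one_le_pow₀ hn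
  have h1' : qnum q n ≤ (n + 1) ^ 2 := h1.trans (le_self_pow₀ hn two_ne_zero)
  have hx : q ^ n * x ≤ |x| * (n + 1) ^ 2 :=
    (le_of_abs_le (abs_pow_mul_le hq n x)).trans (le_mul_of_one_le_right (abs_nonneg x) hn2)
  have hθ : θ * qnum q n ≤ |θ| * (n + 1) ^ 2 :=
    mul_le_mul (le_abs_self θ) h1' h0 (abs_nonneg θ)
  have hs' : -(q ^ n * (s * η * qnum q n)) ≤ s * η * (n + 1) ^ 2 := by
    refine (neg_le_abs _).trans ((abs_pow_mul_le hq n _).trans ?_)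
    rw [abs_of_nonneg (by positivity)]
    gcongr
  calc ACoef η θ τ q x s n
      = η⁻¹ + θ * qnum q n + η * τ * qnum q n ^ 2 + q ^ n * x + -(q ^ n * (s * η * qnum q n)) := by
        rw [ACoef, aCoef]
        ring
    _ ≤ η⁻¹ * (n + 1) ^ 2 + |θ| * (n + 1) ^ 2 + η * τ * (n + 1) ^ 2 + |x| * (n + 1) ^ 2 +
          s * η * (n + 1) ^ 2 := by
        gcongr
        exact le_mul_of_one_le_right (by positivity) hn2
    _ = (η⁻¹ + |θ| + η * (s + τ) + |x|) * (n + 1) ^ 2 := by ring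

lemma deathRate_nonneg (hq : |q| ≤ 1) (hη : 0 < η) (hτ : 0 ≤ τ) (hs : 0 ≤ s) (hst : s ≤ t)
    (n : ℕ) : 0 ≤ deathRate η τ q s t n := by
  have hqs := (le_abs_self _).trans (abs_pow_mul_le hq (n - 1) s)
  rw [abs_of_nonneg hs, mul_comm] at hqs
  have := mul_nonneg hτ (qnum_nonneg hq (n - 1))
  exact mul_nonneg (mul_nonneg hη.le (by linarith)) (qnum_nonneg hq n)

lemma deathRate_le (hq : |q| ≤ 1) (hη : 0 < η) (hτ : 0 ≤ τ) (hs : 0 ≤ s) (hst : s ≤ t) (n : ℕ) :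
    deathRate η τ q s t n ≤ η * (s + t + τ) * (n + 1) ^ 2 := by
  have hqs := (neg_le_abs _).trans (abs_pow_mul_le hq (n - 1) s)
  rw [abs_of_nonneg hs, mul_comm] at hqs
  have hn : (1 : ℝ) ≤ n + 1 := by linarith [n.cast_nonneg (α := ℝ)]
  have h1 : qnum q n ≤ n + 1 := (qnum_le hq n).trans (by linarith)
  have h1' : qnum q (n - 1) ≤ n + 1 := (qnum_le hq (n - 1)).trans <|
    (Nat.cast_le.mpr (n.sub_le 1)).trans (by linarith)
  calc deathRate η τ q s t n
      ≤ η * ((s + t) * (n + 1) + τ * (n + 1)) * (n + 1) := by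
        have hu : t - s * q ^ (n - 1) ≤ (s + t) * (n + 1) := by nlinarith [hn]
        have := qnum_nonneg hq n
        have : 0 ≤ s + t := by linarith
        rw [deathRate]
        gcongr
    _ = η * (s + t + τ) * (n + 1) ^ 2 := by ring

end Growth

section TransitionMeasure

lemma nonneg_of_prod_range_nonneg {A : ℕ → ℝ} (hA : ∀ n, 0 ≤ ∏ k ∈ Finset.range n, A k) {n : ℕ}
    (hpos : ∀ k < n, 0 < A k) : 0 ≤ A n :=
  nonneg_of_mul_nonneg_right (Finset.prod_range_succ A n ▸ hA (n + 1))
    (Finset.prod_pos fun k hk => hpos k (Finset.mem_range.mp hk))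

lemma IsThreeTerm.eval_eq {R : Type*} [CommRing R] {b g : ℕ → R} {P : ℕ → R[X]}
    (hP : IsThreeTerm b g P) {y : R} {p : ℕ → R} (hp0 : p 0 = 1)
    (hp : ∀ n, y * p n = p (n + 1) + b n * p n + g n * p (n - 1)) (n : ℕ) :
    (P n).eval y = p n := by
  induction n using Nat.strong_induction_on with
  | _ n ih =>
    rcases n with _ | n
    · rw [hP.zero, hp0, eval_one]
    · have hPn := congrArg (eval y) (hP.X_mul n)
      simp only [eval_mul, eval_add, eval_X, eval_C, ih n n.lt_succ_self,
        ih (n - 1) (by lia)] at hPn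
      linear_combination hp n - hPn

lemma IsHardy.eq_of_span_eq_top {c : ℝ} {μ ν : Measure ℝ} [IsFiniteMeasure μ] [IsFiniteMeasure ν]
    (h : IsHardy c μ) (hν : HasFiniteMoments ν) {P : ℕ → ℝ[X]}
    (hP : Submodule.span ℝ (Set.range P) = ⊤)
    (hmom : ∀ n, ∫ x, (P n).eval x ∂ν = ∫ x, (P n).eval x ∂μ) : ν = μ := by
  have hfun : hν.functional = h.hasFiniteMoments.functional :=
    LinearMap.ext_on_range hP hmom
  exact h.eq_of_hasFiniteMoments hν fun p => congrArg (· p) hfun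

variable (η θ τ q s t x : ℝ)

lemma isThreeTerm_christoffelPoly_zero :
    IsThreeTerm (bCoef η θ τ q t) (fun n => aCoef η θ τ q (n - 1) * cCoef η τ q t n)
      (christoffelPoly η θ τ q t 0) := by
  convert isThreeTerm_christoffelPoly η θ τ q t 0 using 1 <;> funext n
  · simp only [bCoef, christoffelDiag, cCoef, qnum_zero, zero_add, pow_zero]
    ring
  · rw [christoffelOffDiag, zero_add]

lemma transitionPoly_zero_zero : transitionPoly η θ τ q 0 t 0 = christoffelPoly η θ τ q t 0 := by
  rw [transitionPoly, christoffelPoly]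
  congr 1 <;> funext n
  · simp only [ACoef, aCoef, deathRate, christoffelDiag, cCoef, qnum_zero, zero_add, pow_zero]
    ring
  · simp [ACoef, deathRate, christoffelOffDiag, cCoef]

variable {η θ τ q s t x}

theorem exists_isHardy_transitionPoly (hq : |q| ≤ 1) (hη : 0 < η) (hτ : 0 ≤ τ) (hs : 0 ≤ s)
    (hst : s ≤ t) (hA : ∀ n, 0 ≤ ∏ k ∈ Finset.range n, ACoef η θ τ q x s k) :
    ∃ ν : Measure ℝ, IsProbabilityMeasure ν ∧ IsHardy η⁻¹ ν ∧
      ∀ n, n ≠ 0 → ∫ y, (transitionPoly η θ τ q s t x n).eval y ∂ν = 0 := by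
  have hrate {n : ℕ} (hne : ∀ k < n,
      max (ACoef η θ τ q x s k) 0 * deathRate η τ q s t (k + 1) ≠ 0) :
      ACoef η θ τ q x s n = max (ACoef η θ τ q x s n) 0 := by
    refine (max_eq_left (nonneg_of_prod_range_nonneg hA fun k hk => ?_)).symm
    by_contra! hk0
    exact hne k hk (by rw [max_eq_right hk0, zero_mul])
  have ht : 0 ≤ t := hs.trans hst
  let K := η⁻¹ + |θ| + η * (s + t + τ) + |x|
  refine exists_isHardy_of_isThreeTerm (isThreeTerm_transitionPoly η θ τ q s t x) (K := K)
    (l := fun n => max (ACoef η θ τ q x s n) 0) (m := deathRate η τ q s t)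
    (deathRate_zero η τ q s t) (fun n => le_max_right _ _)
    (deathRate_nonneg hq hη hτ hs hst) (by positivity)
    (fun n => max_le ((ACoef_le hq hη hτ hs n).trans ?_) (by positivity))
    (fun n => (deathRate_le hq hη hτ hs hst n).trans ?_)
    (fun n hne => ?_) (fun n hne => ?_)
  · dsimp only [K]
    gcongr
    linarith
  · dsimp only [K]
    gcongr
    have : 0 ≤ η⁻¹ + |θ| + |x| := by positivity
    linarith
  · rw [sub_add_cancel, ← hrate hne]
  · rw [Nat.add_sub_cancel, ← hrate hne]

theorem isHardy_of_integral_christoffelPoly_eq_zero (hq : |q| ≤ 1) (hη : 0 < η) (hτ : 0 ≤ τ)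
    (ha : ∀ n, 0 ≤ aCoef η θ τ q n) (ht : 0 ≤ t) {μ : Measure ℝ} [IsProbabilityMeasure μ]
    (hμ : HasFiniteMoments μ)
    (hzero : ∀ n, n ≠ 0 → ∫ y, (christoffelPoly η θ τ q t 0 n).eval y ∂μ = 0) :
    IsHardy η⁻¹ μ := by
  obtain ⟨σ, _, hσ, hσzero⟩ := exists_isHardy_transitionPoly (θ := θ) (x := 0) hq hη hτ le_rfl ht
    fun n => Finset.prod_nonneg fun k _ => by simpa [ACoef] using ha k
  have hT := isThreeTerm_christoffelPoly_zero η θ τ q t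
  rw [transitionPoly_zero_zero] at hσzero
  rwa [hσ.eq_of_span_eq_top hμ hT.span_range_eq_top fun n => ?_]
  rcases eq_or_ne n 0 with rfl | hn
  · simp [hT.zero]
  · rw [hzero n hn, hσzero n hn]

theorem prod_ACoef_nonneg_of_mem_support (ha : ∀ n, 0 ≤ aCoef η θ τ q n) {c : ℝ} {μ : Measure ℝ}
    [IsFiniteMeasure μ] (h : IsHardy c μ)
    (horth : IsOrthogonal h.hasFiniteMoments.functional (christoffelPoly η θ τ q s 0))
    (hx : x ∈ μ.support) (n : ℕ) : 0 ≤ ∏ k ∈ Finset.range n, ACoef η θ τ q x s k := by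
  have hprod := h.eval_nonneg_of_mem_support (map_prod_APoly_mul_sq_nonneg horth ha n) hx
  simpa only [eval_prod, eval_APoly] using hprod

theorem exists_isHardy_integral_christoffelPoly (hq : |q| ≤ 1) (hη : 0 < η) (hτ : 0 ≤ τ)
    (hs : 0 ≤ s) (hst : s ≤ t) (hA : ∀ n, 0 ≤ ∏ k ∈ Finset.range n, ACoef η θ τ q x s k) :
    ∃ ν : Measure ℝ, IsProbabilityMeasure ν ∧ IsHardy η⁻¹ ν ∧
      ∀ n, ∫ y, (christoffelPoly η θ τ q t 0 n).eval y ∂ν =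
        (christoffelPoly η θ τ q s 0 n).eval x := by
  obtain ⟨ν, hν, hHardy, hzero⟩ := exists_isHardy_transitionPoly hq hη hτ hs hst hA
  refine ⟨ν, hν, hHardy, fun n => ?_⟩
  rw [← hHardy.hasFiniteMoments.functional_apply,
    eq_sum_connectionCoef_mul_transitionPoly η θ τ q s t x
      (isThreeTerm_christoffelPoly_zero η θ τ q t) n, map_sum,
    Finset.sum_eq_single_of_mem 0 (Finset.mem_range.mpr n.succ_pos) fun k _ hk => ?_]
  · rw [C_mul', map_smul, (isThreeTerm_transitionPoly η θ τ q s t x).zero,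
      connectionCoef_zero_right, HasFiniteMoments.functional_apply]
    simp
  · rw [C_mul', map_smul, HasFiniteMoments.functional_apply, hzero k hk, smul_zero]

end TransitionMeasure

theorem stmt19_general (η θ τ q s t : ℝ)
    (hq : |q| ≤ 1) (hη : 0 < η) (hτ : 0 ≤ τ) (ha : ∀ n, 0 ≤ aCoef η θ τ q n)
    (hs : 0 ≤ s) (hst : s ≤ t)
    (pbar : ℝ → ℝ → ℕ → ℝ)
    (hpbar0 : ∀ t' y : ℝ, pbar t' y 0 = 1)
    (hpbarrec : ∀ (t' y : ℝ) (n : ℕ), y * pbar t' y n =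
      pbar t' y (n + 1) + bCoef η θ τ q t' n * pbar t' y n
        + aCoef η θ τ q (n - 1) * cCoef η τ q t' n * pbar t' y (n - 1))
    (μ : Measure ℝ)
    (hprob : IsProbabilityMeasure μ)
    (hmom : ∀ n : ℕ, Integrable (fun y : ℝ => |y| ^ n) μ)
    (horth : ∀ m n : ℕ, m ≠ n → ∫ y, pbar s y m * pbar s y n ∂μ = 0) :
    ∀ x : ℝ, (∀ U : Set ℝ, IsOpen U → x ∈ U → 0 < μ U) →
      ∃! ν : Measure ℝ, IsProbabilityMeasure ν ∧
        (∀ n : ℕ, Integrable (fun y : ℝ => |y| ^ n) ν) ∧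
        ∀ n : ℕ, pbar s x n = ∫ y, pbar t y n ∂ν := by
  intro x hx
  have hsupp : x ∈ μ.support :=
    (Measure.support_eq_forall_isOpen (μ := μ)).symm ▸ fun U hxU hU => hx U hU hxU
  have hpbar (t' y : ℝ) (n : ℕ) : pbar t' y n = (christoffelPoly η θ τ q t' 0 n).eval y :=
    ((isThreeTerm_christoffelPoly_zero η θ τ q t').eval_eq (hpbar0 t' y) (hpbarrec t' y) n).symm
  simp only [hpbar] at horth ⊢
  have hμ : IsHardy η⁻¹ μ := by
    refine isHardy_of_integral_christoffelPoly_eq_zero hq hη hτ ha hs hmom fun n hn => ?_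
    simpa [(isThreeTerm_christoffelPoly_zero η θ τ q s).zero] using horth n 0 hn
  have hΛ : IsOrthogonal hμ.hasFiniteMoments.functional (christoffelPoly η θ τ q s 0) := by
    constructor <;> intros <;> simp only [HasFiniteMoments.functional_apply, eval_mul]
    · exact horth _ _ (by lia)
    · exact integral_nonneg fun y => mul_self_nonneg _
  obtain ⟨ν, hν, hνHardy, hmoments⟩ := exists_isHardy_integral_christoffelPoly hq hη hτ hs hst
    (prod_ACoef_nonneg_of_mem_support ha hμ hΛ hsupp)
  refine ⟨ν, ⟨hν, hνHardy.hasFiniteMoments, fun n => (hmoments n).symm⟩, ?_⟩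
  rintro ρ ⟨_, hρmom, hρ⟩
  exact hνHardy.eq_of_span_eq_top hρmom
    (isThreeTerm_christoffelPoly_zero η θ τ q t).span_range_eq_top
    fun n => (hρ n).symm.trans (hmoments n).symm

end

/-- main projection formula: let `0 ≤ q ≤ 1`, `η > 0`, `θ ≥ 0`, `τ ≥ 0` and
`0 < s ≤ t`.  If `μ_s` is an orthogonality measure of the monic polynomials `{p̄_n(·;s)}`
(a probability measure with finite moments of all orders), then for every `x` in the
topological support of `μ_s` there is a unique probability measure `ν_x` on `ℝ` with finite
moments of all orders such that `p̄_n(x;s) = ∫ p̄_n(y;t) ν_x(dy)` for all `n ≥ 0`.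
Here `pbar t y n` denotes `p̄_n(y;t)`. -/
theorem stmt19 (η θ τ q s t : ℝ)
    (hq0 : 0 ≤ q) (hq1 : q ≤ 1) (hη : 0 < η) (hθ : 0 ≤ θ) (hτ : 0 ≤ τ)
    (hs : 0 < s) (hst : s ≤ t)
    (pbar : ℝ → ℝ → ℕ → ℝ)
    (hpbar0 : ∀ t' y : ℝ, pbar t' y 0 = 1)
    (hpbarrec : ∀ (t' y : ℝ) (n : ℕ), y * pbar t' y n =
      pbar t' y (n + 1) + bCoef η θ τ q t' n * pbar t' y n
        + aCoef η θ τ q (n - 1) * cCoef η τ q t' n * pbar t' y (n - 1))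
    (μ : Measure ℝ)
    (hprob : IsProbabilityMeasure μ)
    (hmom : ∀ n : ℕ, Integrable (fun y : ℝ => |y| ^ n) μ)
    (horth : ∀ m n : ℕ, m ≠ n → ∫ y, pbar s y m * pbar s y n ∂μ = 0) :
    ∀ x : ℝ, (∀ U : Set ℝ, IsOpen U → x ∈ U → 0 < μ U) →
      ∃! ν : Measure ℝ, IsProbabilityMeasure ν ∧
        (∀ n : ℕ, Integrable (fun y : ℝ => |y| ^ n) ν) ∧
        ∀ n : ℕ, pbar s x n = ∫ y, pbar t y n ∂ν :=
  stmt19_general η θ τ q s t (abs_le.mpr ⟨by linarith, hq1⟩) hη hτ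
    (aCoef_nonneg (abs_le.mpr ⟨by linarith, hq1⟩) hη hθ hτ) hs.le hst pbar hpbar0 hpbarrec μ hprob
    hmom horth
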